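/- arXiv:1707.07739 — 12 statements merged into one kernel-verified Lean document; each statement's English description precedes it below -/
import Mathlib

section
/- Let θ > 0. Let A be a flow and U a service process on a common probability space, with A MGF-bounded for θ with bounding functions (ρ_A, σ_A), U MGF-bounded for θ with bounding functions (ρ_U, σ_U), and suppose the processes A and U are stochastically independent. Let B be the output of a dynamic U-server with input A, and define the backlog b(t) := A(t) − B(t). If ρ_A(θ) + ρ_U(θ) < 0, then for every t ≥ 0 and every N ≥ 0: P(b(t) > N) ≤ e^{−θN} · e^{θσ_A(θ) + θσ_U(θ)} / (1 − e^{θ(ρ_A(θ)+ρ_U(θ))}). -/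
/-!
If the backlog at time `t` exceeds `N`, the server inequality, whose infimum over `0 ≤ s ≤ t` is
attained, gives some `s ≤ t` with `A(s,t) - U(s,t) > N`. For fixed `s`, the Chernoff bound together
with independence of `A` and `U` bounds the probability of this event by
`e^{-θN} e^{θσ_A + θσ_U} r^{t-s}`, where `r = e^{θ(ρ_A + ρ_U)} < 1` (`chernoff_indep`). A union
bound over `s` and the geometric series then give the result.
-/

open MeasureTheory ProbabilityTheory

/-- Chernoff bound for the difference of two random variables measurable with respect to
independent σ-algebras. Lower Lebesgue integrals make any integrability assumption unnecessary. -/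
lemma chernoff_indep {Ω : Type*} {mA mU m : MeasurableSpace Ω} {P : Measure Ω}
    (hmA : mA ≤ m) (hmU : mU ≤ m) (hIndep : Indep mA mU P) {θ : ℝ} (hθ : 0 < θ)
    {X Y : Ω → ℝ} (hX : Measurable[mA] X) (hY : Measurable[mU] Y) {a b : ℝ}
    (hXb : ∫⁻ ω, ENNReal.ofReal (Real.exp (θ * X ω)) ∂P ≤ ENNReal.ofReal (Real.exp a))
    (hYb : ∫⁻ ω, ENNReal.ofReal (Real.exp (-θ * Y ω)) ∂P ≤ ENNReal.ofReal (Real.exp b))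
    (N : ℝ) :
    P {ω | N < X ω - Y ω} ≤ ENNReal.ofReal (Real.exp (-(θ * N)) * Real.exp (a + b)) := by
  have hf : Measurable[mA] fun ω => ENNReal.ofReal (Real.exp (θ * X ω)) :=
    ENNReal.measurable_ofReal.comp (Real.measurable_exp.comp (hX.const_mul θ))
  have hg : Measurable[mU] fun ω => ENNReal.ofReal (Real.exp (-θ * Y ω)) :=
    ENNReal.measurable_ofReal.comp (Real.measurable_exp.comp (hY.const_mul (-θ)))
  have hprod := lintegral_mul_eq_lintegral_mul_lintegral_of_independent_measurableSpace
    hmA hmU hIndep hf hg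
  have hmeas := (hf.mono hmA le_rfl).mul (hg.mono hmU le_rfl)
  have hmarkov := mul_meas_ge_le_lintegral (μ := P)
    (hmeas.const_mul (ENNReal.ofReal (Real.exp (-(θ * N))))) 1
  rw [one_mul] at hmarkov
  rw [lintegral_const_mul _ hmeas] at hmarkov
  refine (measure_mono ?_).trans (hmarkov.trans ?_)
  · intro ω hω
    simp only [Set.mem_ofPred_eq, Pi.mul_apply] at hω ⊢
    rw [← ENNReal.ofReal_mul (Real.exp_pos _).le, ← ENNReal.ofReal_mul (Real.exp_pos _).le,
      ← Real.exp_add, ← Real.exp_add, ENNReal.one_le_ofReal, Real.one_le_exp_iff]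
    nlinarith
  · rw [Real.exp_add, ENNReal.ofReal_mul (Real.exp_pos _).le,
      ENNReal.ofReal_mul (Real.exp_pos _).le]
    refine mul_le_mul_right ?_ _
    exact hprod.le.trans (mul_le_mul' hXb hYb)

/-- Backlog bound for a single dynamic server (Theorem 1, backlog part). -/
theorem backlog_bound
    {Ω : Type*} [MeasurableSpace Ω] (P : Measure Ω) [IsProbabilityMeasure P]
    (θ : ℝ) (hθ : 0 < θ)
    (A B : ℕ → Ω → ℝ) (U : ℕ → ℕ → Ω → ℝ)
    (ρA σA ρU σU : ℝ)
    -- A is a flow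
    (hAmeas : ∀ t, Measurable (A t))
    (hAmono : ∀ ω, Monotone fun t => A t ω)
    (hAzero : ∀ ω, A 0 ω = 0)
    -- U is a service process
    (hUmeas : ∀ s t, Measurable (U s t))
    (hUnonneg : ∀ s t, s ≤ t → ∀ ω, 0 ≤ U s t ω)
    -- MGF bound for A
    (hAbound : ∀ s t, s ≤ t →
      ∫⁻ ω, ENNReal.ofReal (Real.exp (θ * (A t ω - A s ω))) ∂P
        ≤ ENNReal.ofReal (Real.exp (θ * ρA * ((t : ℝ) - (s : ℝ)) + θ * σA)))
    -- MGF bound for U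
    (hUbound : ∀ s t, s ≤ t →
      ∫⁻ ω, ENNReal.ofReal (Real.exp (-θ * U s t ω)) ∂P
        ≤ ENNReal.ofReal (Real.exp (θ * ρU * ((t : ℝ) - (s : ℝ)) + θ * σU)))
    -- A and U are stochastically independent
    (hIndep : Indep (⨆ t, MeasurableSpace.comap (A t) inferInstance)
      (⨆ p : ℕ × ℕ, MeasurableSpace.comap (U p.1 p.2) inferInstance) P)
    -- B is the output of a dynamic U-server with input A (and is a flow)
    (hBmeas : ∀ t, Measurable (B t))
    (hBmono : ∀ ω, Monotone fun t => B t ω)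
    (hBzero : ∀ ω, B 0 ω = 0)
    (hServer : ∀ t ω, sInf ((fun s => A s ω + U s t ω) '' Set.Icc 0 t) ≤ B t ω)
    (hBleA : ∀ t ω, B t ω ≤ A t ω)
    -- stability condition
    (hstab : ρA + ρU < 0)
    (t : ℕ) (N : ℝ) (hN : 0 ≤ N) :
    P {ω | A t ω - B t ω > N}
      ≤ ENNReal.ofReal (Real.exp (-(θ * N)) * Real.exp (θ * σA + θ * σU)
          / (1 - Real.exp (θ * (ρA + ρU)))) := by
  have hmA : (⨆ t, MeasurableSpace.comap (A t) inferInstance) ≤ ‹MeasurableSpace Ω› :=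
    iSup_le fun t => (hAmeas t).comap_le
  have hmU : (⨆ p : ℕ × ℕ, MeasurableSpace.comap (U p.1 p.2) inferInstance)
      ≤ ‹MeasurableSpace Ω› :=
    iSup_le fun p => (hUmeas p.1 p.2).comap_le
  have hA' : ∀ s, Measurable[⨆ t, MeasurableSpace.comap (A t) inferInstance] (A s) := fun s =>
    (comap_measurable (A s)).mono
      (le_iSup (fun t => MeasurableSpace.comap (A t) inferInstance) s) le_rfl
  have hU' : ∀ s, Measurable[⨆ p : ℕ × ℕ, MeasurableSpace.comap (U p.1 p.2) inferInstance]
      (U s t) := fun s =>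
    (comap_measurable (U s t)).mono
      (le_iSup (fun p : ℕ × ℕ => MeasurableSpace.comap (U p.1 p.2) inferInstance) (s, t)) le_rfl
  set r := Real.exp (θ * (ρA + ρU)) with hr
  have hr0 : 0 ≤ r := (Real.exp_pos _).le
  have hr1 : r < 1 := by
    rw [hr, Real.exp_lt_one_iff]
    exact mul_neg_of_pos_of_neg hθ hstab
  set C := Real.exp (-(θ * N)) * Real.exp (θ * σA + θ * σU) with hC
  have hC0 : 0 ≤ C := by positivity
  have hterm : ∀ s ∈ Finset.range (t + 1),
      P {ω | N < (A t ω - A s ω) - U s t ω} ≤ ENNReal.ofReal (C * r ^ (t - s)) := by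
    intro s hs
    have hst : s ≤ t := Nat.lt_succ_iff.mp (Finset.mem_range.mp hs)
    refine (chernoff_indep hmA hmU hIndep hθ ((hA' t).sub (hA' s)) (hU' s)
      (hAbound s t hst) (hUbound s t hst) N).trans_eq ?_
    congr 1
    rw [hC, hr, ← Real.exp_nat_mul, Nat.cast_sub hst]
    simp only [← Real.exp_add]
    congr 1
    ring
  have hsub : {ω | A t ω - B t ω > N} ⊆
      ⋃ s ∈ Finset.range (t + 1), {ω | N < (A t ω - A s ω) - U s t ω} := by
    intro ω hω
    have hne : ((fun s => A s ω + U s t ω) '' Set.Icc 0 t).Nonempty :=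
      (Set.nonempty_Icc.mpr (Nat.zero_le t)).image _
    obtain ⟨s, hs, hsEq⟩ := hne.csInf_mem ((Set.finite_Icc 0 t).image _)
    have hle := hServer t ω
    rw [← hsEq] at hle
    simp only [Set.mem_iUnion, Finset.mem_range, Set.mem_ofPred_eq, exists_prop] at hω ⊢
    exact ⟨s, Nat.lt_succ_of_le hs.2, by dsimp only at hle; linarith⟩
  calc P {ω | A t ω - B t ω > N}
      ≤ ∑ s ∈ Finset.range (t + 1), P {ω | N < (A t ω - A s ω) - U s t ω} :=
        (measure_mono hsub).trans (measure_biUnion_finset_le _ _)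
    _ ≤ ∑ s ∈ Finset.range (t + 1), ENNReal.ofReal (C * r ^ (t - s)) := Finset.sum_le_sum hterm
    _ = ENNReal.ofReal (C * ∑ s ∈ Finset.range (t + 1), r ^ s) := by
        rw [← ENNReal.ofReal_sum_of_nonneg fun s _ => by positivity, ← Finset.mul_sum,
          ← Finset.sum_range_reflect (fun s => r ^ s)]
        simp
    _ ≤ ENNReal.ofReal (C / (1 - r)) := by
        refine ENNReal.ofReal_le_ofReal ?_
        rw [div_eq_mul_inv, ← tsum_geometric_of_lt_one hr0 hr1]
        exact mul_le_mul_of_nonneg_left ((summable_geometric_of_lt_one hr0 hr1).sum_le_tsum _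
          fun i _ => pow_nonneg hr0 i) hC0
end

section
/- Let θ > 0. Let A be a flow and U a service process on a common probability space, with A MGF-bounded for θ with bounding functions (ρ_A, σ_A), U MGF-bounded for θ with bounding functions (ρ_U, σ_U), and suppose the processes A and U are stochastically independent. Let B be the output of a dynamic U-server with input A, and define the virtual delay d(t) := min{ s ≥ 0 : A(t) ≤ B(t+s) }. If ρ_A(θ) + ρ_U(θ) < 0, then for every t ≥ 0 and every integer T ≥ 0: P(d(t) > T) ≤ e^{θρ_U(θ)T} · e^{θσ_A(θ) + θσ_U(θ)} / (1 − e^{θ(ρ_A(θ)+ρ_U(θ))}). -/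
/-!
If `d(t) > T` then `B(t+T) < A(t)`, and the server inequality at time `t+T` yields some
`s ≤ t+T` with `A(s) + U(s,t+T) < A(t)`. Monotonicity of `A` and `U ≥ 0` force `s < t`. The Chernoff bound and
independence bound the probability for each `s` by
`E[exp(θ A(s,t))] * E[exp(-θ U(s,t+T))]` (`measure_add_lt_le`); the union bound over `s < t` then
gives a partial geometric series with ratio `exp(θ (ρA + ρU)) < 1` (`sum_pow_sub_le`).
-/

open MeasureTheory ProbabilityTheory

/-- Chernoff bound for `X + V < Y`, with the moment generating function factored by independence of
the σ-algebras carrying `Y - X` and `V`. -/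
lemma measure_add_lt_le {Ω : Type*} {mΩ : MeasurableSpace Ω} {P : Measure Ω}
    {m₁ m₂ : MeasurableSpace Ω} (h₁ : m₁ ≤ mΩ) (h₂ : m₂ ≤ mΩ) (hind : Indep m₁ m₂ P)
    {X Y V : Ω → ℝ} (hX : Measurable[m₁] X) (hY : Measurable[m₁] Y) (hV : Measurable[m₂] V)
    {θ : ℝ} (hθ : 0 < θ) :
    P {ω | X ω + V ω < Y ω} ≤
      (∫⁻ ω, ENNReal.ofReal (Real.exp (θ * (Y ω - X ω))) ∂P) *
        ∫⁻ ω, ENNReal.ofReal (Real.exp (-θ * V ω)) ∂P := by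
  have hf : Measurable[m₁] fun ω => ENNReal.ofReal (Real.exp (θ * (Y ω - X ω))) :=
    (by fun_prop : Measurable fun x : ℝ => ENNReal.ofReal (Real.exp (θ * x))).comp (hY.sub hX)
  have hg : Measurable[m₂] fun ω => ENNReal.ofReal (Real.exp (-θ * V ω)) :=
    (by fun_prop : Measurable fun x : ℝ => ENNReal.ofReal (Real.exp (-θ * x))).comp hV
  rw [← lintegral_mul_eq_lintegral_mul_lintegral_of_independent_measurableSpace h₁ h₂ hind hf hg]
  have hfg := (hf.mono h₁ le_rfl).mul (hg.mono h₂ le_rfl)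
  refine le_trans (measure_mono ?_)
    ((one_mul _).symm.le.trans (mul_meas_ge_le_lintegral hfg 1))
  intro ω hω
  simp only [Set.mem_ofPred_eq, Pi.mul_apply] at hω ⊢
  rw [← ENNReal.ofReal_mul (Real.exp_pos _).le, ← Real.exp_add, ENNReal.one_le_ofReal,
    Real.one_le_exp_iff]
  nlinarith [mul_pos hθ (sub_pos.2 hω)]

lemma sum_pow_sub_le {q : ℝ} (hq0 : 0 ≤ q) (hq1 : q < 1) (t : ℕ) :
    ∑ s ∈ Finset.range t, q ^ (t - s) ≤ 1 / (1 - q) := by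
  have h : ∑ s ∈ Finset.range t, q ^ (t - s) ≤ ∑ s ∈ Finset.range t, q ^ (t - 1 - s) :=
    Finset.sum_le_sum fun s _ => pow_le_pow_of_le_one hq0 hq1.le (by omega)
  rw [Finset.sum_range_reflect (fun k => q ^ k) t] at h
  refine h.trans ?_
  rw [one_div, ← tsum_geometric_of_lt_one hq0 hq1]
  exact (summable_geometric_of_lt_one hq0 hq1).sum_le_tsum _ fun k _ => pow_nonneg hq0 k

/-- Virtual delay bound for a single dynamic server (Theorem 1, delay part).
The virtual delay `d(t) = min { s ≥ 0 | A(t) ≤ B(t+s) }` exceeds `T` exactly on the event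
`{ω | every s with A(t) ≤ B(t+s) satisfies s > T}` (with `min ∅ = ∞`). -/
theorem delay_bound
    {Ω : Type*} [MeasurableSpace Ω] (P : Measure Ω) [IsProbabilityMeasure P]
    (θ : ℝ) (hθ : 0 < θ)
    (A B : ℕ → Ω → ℝ) (U : ℕ → ℕ → Ω → ℝ)
    (ρA σA ρU σU : ℝ)
    -- A is a flow
    (hAmeas : ∀ t, Measurable (A t))
    (hAmono : ∀ ω, Monotone fun t => A t ω)
    (hAzero : ∀ ω, A 0 ω = 0)
    -- U is a service process
    (hUmeas : ∀ s t, Measurable (U s t))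
    (hUnonneg : ∀ s t, s ≤ t → ∀ ω, 0 ≤ U s t ω)
    -- MGF bound for A
    (hAbound : ∀ s t, s ≤ t →
      ∫⁻ ω, ENNReal.ofReal (Real.exp (θ * (A t ω - A s ω))) ∂P
        ≤ ENNReal.ofReal (Real.exp (θ * ρA * ((t : ℝ) - (s : ℝ)) + θ * σA)))
    -- MGF bound for U
    (hUbound : ∀ s t, s ≤ t →
      ∫⁻ ω, ENNReal.ofReal (Real.exp (-θ * U s t ω)) ∂P
        ≤ ENNReal.ofReal (Real.exp (θ * ρU * ((t : ℝ) - (s : ℝ)) + θ * σU)))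
    -- A and U are stochastically independent
    (hIndep : Indep (⨆ t, MeasurableSpace.comap (A t) inferInstance)
      (⨆ p : ℕ × ℕ, MeasurableSpace.comap (U p.1 p.2) inferInstance) P)
    -- B is the output of a dynamic U-server with input A (and is a flow)
    (hBmeas : ∀ t, Measurable (B t))
    (hBmono : ∀ ω, Monotone fun t => B t ω)
    (hBzero : ∀ ω, B 0 ω = 0)
    (hServer : ∀ t ω, sInf ((fun s => A s ω + U s t ω) '' Set.Icc 0 t) ≤ B t ω)
    (hBleA : ∀ t ω, B t ω ≤ A t ω)
    -- stability condition
    (hstab : ρA + ρU < 0)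
    (t : ℕ) (T : ℕ) :
    P {ω | ∀ s : ℕ, A t ω ≤ B (t + s) ω → T < s}
      ≤ ENNReal.ofReal (Real.exp (θ * ρU * (T : ℝ)) * Real.exp (θ * σA + θ * σU)
          / (1 - Real.exp (θ * (ρA + ρU)))) := by
  have hq1 : Real.exp (θ * (ρA + ρU)) < 1 := Real.exp_lt_one_iff.2 (mul_neg_of_pos_of_neg hθ hstab)
  have hsub : {ω | ∀ s : ℕ, A t ω ≤ B (t + s) ω → T < s} ⊆
      ⋃ s ∈ Finset.range t, {ω | A s ω + U s (t + T) ω < A t ω} := by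
    intro ω hω
    have hlt : B (t + T) ω < A t ω := by
      by_contra! h
      exact lt_irrefl _ (hω T h)
    -- The infimum is over a finite nonempty set, hence attained.
    have hmem : sInf ((fun s => A s ω + U s (t + T) ω) '' Set.Icc 0 (t + T)) ∈
        (fun s => A s ω + U s (t + T) ω) '' Set.Icc 0 (t + T) :=
      Set.Nonempty.csInf_mem ⟨_, Set.mem_image_of_mem _ (Set.left_mem_Icc.2 (Nat.zero_le _))⟩
        ((Set.finite_Icc _ _).image _)
    obtain ⟨s, hs, hs_eq⟩ := hmem
    have hsA : A s ω + U s (t + T) ω < A t ω := (hs_eq.le.trans (hServer _ ω)).trans_lt hlt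
    have hst : s < t := by
      by_contra! h
      have h1 : A t ω ≤ A s ω := hAmono ω h
      have h2 := hUnonneg s (t + T) hs.2 ω
      linarith
    exact Set.mem_biUnion (Finset.mem_coe.2 (Finset.mem_range.2 hst)) hsA
  set C := Real.exp (θ * ρU * (T : ℝ)) * Real.exp (θ * σA + θ * σU) with hC
  have hC0 : 0 ≤ C := by positivity
  have hterm : ∀ s ∈ Finset.range t, P {ω | A s ω + U s (t + T) ω < A t ω} ≤
      ENNReal.ofReal (C * Real.exp (θ * (ρA + ρU)) ^ (t - s)) := by
    intro s hs
    have hst : s ≤ t := (Finset.mem_range.1 hs).le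
    have hA : ∀ r, Measurable[⨆ t, MeasurableSpace.comap (A t) inferInstance] (A r) := fun r =>
      (comap_measurable (A r)).mono
        (le_iSup (fun t => MeasurableSpace.comap (A t) inferInstance) r) le_rfl
    have hU : Measurable[⨆ p : ℕ × ℕ, MeasurableSpace.comap (U p.1 p.2) inferInstance]
        (U s (t + T)) :=
      (comap_measurable (U s (t + T))).mono
        (le_iSup (fun p : ℕ × ℕ => MeasurableSpace.comap (U p.1 p.2) inferInstance) (s, t + T))
        le_rfl
    have hA_le : (⨆ t, MeasurableSpace.comap (A t) inferInstance) ≤ ‹MeasurableSpace Ω› :=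
      iSup_le fun r => (hAmeas r).comap_le
    have hU_le : (⨆ p : ℕ × ℕ, MeasurableSpace.comap (U p.1 p.2) inferInstance) ≤
        ‹MeasurableSpace Ω› :=
      iSup_le fun p => (hUmeas p.1 p.2).comap_le
    refine (measure_add_lt_le hA_le hU_le hIndep (hA s) (hA t) hU hθ).trans ?_
    refine (mul_le_mul' (hAbound s t hst) (hUbound s (t + T) (by omega))).trans (le_of_eq ?_)
    rw [← ENNReal.ofReal_mul (Real.exp_pos _).le, hC, ← Real.exp_nat_mul, ← Real.exp_add,
      ← Real.exp_add, ← Real.exp_add]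
    congr 2
    push_cast [Nat.cast_sub hst]
    ring
  calc P {ω | ∀ s : ℕ, A t ω ≤ B (t + s) ω → T < s}
      ≤ ∑ s ∈ Finset.range t, P {ω | A s ω + U s (t + T) ω < A t ω} :=
        (measure_mono hsub).trans (measure_biUnion_finset_le _ _)
    _ ≤ ∑ s ∈ Finset.range t, ENNReal.ofReal (C * Real.exp (θ * (ρA + ρU)) ^ (t - s)) :=
        Finset.sum_le_sum hterm
    _ = ENNReal.ofReal (C * ∑ s ∈ Finset.range t, Real.exp (θ * (ρA + ρU)) ^ (t - s)) := by
        rw [Finset.mul_sum, ENNReal.ofReal_sum_of_nonneg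
          fun s _ => mul_nonneg hC0 (pow_nonneg (Real.exp_pos _).le _)]
    _ ≤ ENNReal.ofReal (C / (1 - Real.exp (θ * (ρA + ρU)))) := by
        rw [div_eq_mul_one_div C]
        exact ENNReal.ofReal_le_ofReal
          (mul_le_mul_of_nonneg_left (sum_pow_sub_le (Real.exp_pos _).le hq1 t) hC0)
end

section
/- (Tandem reduction, deterministic part of the convolution lemma.) Let A, B, C be flows and U₁, U₂ service processes. If B(t) ≥ min_{0≤s≤t} (A(s) + U₁(s,t)) for all t and C(t) ≥ min_{0≤s≤t} (B(s) + U₂(s,t)) for all t, then C(t) ≥ min_{0≤s≤t} (A(s) + (U₁ ⊗ U₂)(s,t)) for all t, where (U₁ ⊗ U₂)(s,t) := min_{s≤r≤t} (U₁(s,r) + U₂(r,t)). In other words, a tandem of a dynamic U₁-server followed by a dynamic U₂-server is a dynamic (U₁ ⊗ U₂)-server. -/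
open MeasureTheory

/-! The index sets are finite, so every infimum is attained (`exists_eq_sInf_image_Icc`) and is a
lower bound (`sInf_image_Icc_le`). Let `r ≤ t` attain the infimum in the bound on `C t`, and `s ≤ r`
the one in the bound on `B r`. Then `A s + U₁ s r + U₂ r t ≤ C t`, and the left-hand side is one of
the candidates for the infimum over `(s, r)` with `s ≤ r ≤ t`. -/

lemma exists_eq_sInf_image_Icc (f : ℕ → ℝ) {a t : ℕ} (h : a ≤ t) :
    ∃ s ∈ Set.Icc a t, f s = sInf (f '' Set.Icc a t) :=
  ((Set.nonempty_Icc.2 h).image f).csInf_mem ((Set.finite_Icc a t).image f)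

lemma sInf_image_Icc_le (f : ℕ → ℝ) {a t s : ℕ} (h : s ∈ Set.Icc a t) :
    sInf (f '' Set.Icc a t) ≤ f s :=
  csInf_le ((Set.finite_Icc a t).image f).bddBelow (Set.mem_image_of_mem f h)

/-- Tandem reduction: a dynamic `U₁`-server followed by a dynamic `U₂`-server is a
dynamic `(U₁ ⊗ U₂)`-server, where `(U₁ ⊗ U₂)(s,t) = min_{s ≤ r ≤ t} (U₁(s,r) + U₂(r,t))`. -/
theorem tandem_reduction
    {Ω : Type*}
    (A B C : ℕ → Ω → ℝ) (U₁ U₂ : ℕ → ℕ → Ω → ℝ)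
    -- A, B, C are flows
    (hAmono : ∀ ω, Monotone fun t => A t ω) (hAzero : ∀ ω, A 0 ω = 0)
    (hBmono : ∀ ω, Monotone fun t => B t ω) (hBzero : ∀ ω, B 0 ω = 0)
    (hCmono : ∀ ω, Monotone fun t => C t ω) (hCzero : ∀ ω, C 0 ω = 0)
    -- U₁, U₂ are service processes
    (hU₁nonneg : ∀ s t, s ≤ t → ∀ ω, 0 ≤ U₁ s t ω)
    (hU₂nonneg : ∀ s t, s ≤ t → ∀ ω, 0 ≤ U₂ s t ω)
    -- server properties
    (hB : ∀ t ω, sInf ((fun s => A s ω + U₁ s t ω) '' Set.Icc 0 t) ≤ B t ω)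
    (hC : ∀ t ω, sInf ((fun s => B s ω + U₂ s t ω) '' Set.Icc 0 t) ≤ C t ω) :
    ∀ t ω, sInf ((fun s => A s ω +
        sInf ((fun r => U₁ s r ω + U₂ r t ω) '' Set.Icc s t)) '' Set.Icc 0 t) ≤ C t ω := by
  intro t ω
  obtain ⟨r, hr, hr_eq⟩ := exists_eq_sInf_image_Icc (fun s => B s ω + U₂ s t ω) (Nat.zero_le t)
  obtain ⟨s, hs, hs_eq⟩ := exists_eq_sInf_image_Icc (fun s => A s ω + U₁ s r ω) (Nat.zero_le r)
  have h_outer := sInf_image_Icc_le (fun s => A s ω +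
    sInf ((fun r => U₁ s r ω + U₂ r t ω) '' Set.Icc s t)) (a := 0) (t := t) (s := s)
    ⟨Nat.zero_le s, hs.2.trans hr.2⟩
  have h_inner := sInf_image_Icc_le (fun r => U₁ s r ω + U₂ r t ω) (a := s) (t := t) (s := r)
    ⟨hs.2, hr.2⟩
  have hBr := hB r ω
  have hCt := hC t ω
  rw [← hs_eq] at hBr
  rw [← hr_eq] at hCt
  refine h_outer.trans ?_
  linarith
end

section
/- (Convolution, independent case.) Let θ > 0 and let U₁ and U₂ be two stochastically independent service processes on a common probability space, MGF-bounded for θ with bounding functions (ρ₁, σ₁) and (ρ₂, σ₂) respectively, and assume ρ₁(θ) ≠ ρ₂(θ). Then the min-plus convolution U₁ ⊗ U₂, defined by (U₁ ⊗ U₂)(s,t) := min_{s≤r≤t} (U₁(s,r) + U₂(r,t)), is MGF-bounded for θ with bounding functions ρ(θ) = max(ρ₁(θ), ρ₂(θ)) and σ(θ) = σ₁(θ) + σ₂(θ) − (1/θ)·log(1 − e^{−θ|ρ₁(θ) − ρ₂(θ)|}); that is, E[e^{−θ(U₁⊗U₂)(s,t)}] ≤ e^{θ max(ρ₁(θ),ρ₂(θ))(t−s)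 + θσ(θ)} for all s ≤ t. -/
/-!
Since the minimum over `s ≤ r ≤ t` is attained, `e^{-θ (U₁ ⊗ U₂)(s,t)}` is one of the terms
`e^{-θ U₁(s,r)} e^{-θ U₂(r,t)}` and hence at most their sum over `r`. By independence each
expectation factorizes, and the MGF bounds leave
`e^{θ(σ₁+σ₂)} ∑_r e^{θ ρ₁ (r-s) + θ ρ₂ (t-r)}`. Pulling out `e^{θ max(ρ₁,ρ₂) (t-s)}` turns the
summands into distinct powers of `q = e^{-θ|ρ₁-ρ₂|} < 1`, so the sum is at most `1 / (1 - q)`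
(`sum_exp_rates_le`), which is the logarithmic term in `σ`.
-/

open MeasureTheory ProbabilityTheory

theorem sum_pow_le_of_injOn {q : ℝ} (hq0 : 0 ≤ q) (hq1 : q < 1) (S : Finset ℕ) (f : ℕ → ℕ)
    (hf : Set.InjOn f S) : ∑ r ∈ S, q ^ f r ≤ (1 - q)⁻¹ := by
  rw [← Finset.sum_image (f := fun k => q ^ k) hf, ← tsum_geometric_of_lt_one hq0 hq1]
  exact (summable_geometric_of_lt_one hq0 hq1).sum_le_tsum _ (fun k _ => pow_nonneg hq0 k)

/-- The geometric sum bound: relative to the larger rate, the exponents decrease by `θ|ρ₁ - ρ₂|`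
per step, counted from `s` if `ρ₁ < ρ₂` and from `t` if `ρ₂ < ρ₁`. -/
theorem sum_exp_rates_le {θ ρ₁ ρ₂ : ℝ} (hθ : 0 < θ) (hne : ρ₁ ≠ ρ₂) (s t : ℕ) :
    ∑ r ∈ Finset.Icc s t,
        Real.exp (θ * ρ₁ * ((r : ℝ) - (s : ℝ)) + θ * ρ₂ * ((t : ℝ) - (r : ℝ)))
      ≤ Real.exp (θ * max ρ₁ ρ₂ * ((t : ℝ) - (s : ℝ)))
          * (1 - Real.exp (-θ * |ρ₁ - ρ₂|))⁻¹ := by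
  have hq1 : Real.exp (-θ * |ρ₁ - ρ₂|) < 1 := by
    have := mul_pos hθ (abs_pos.mpr (sub_ne_zero.mpr hne))
    rw [Real.exp_lt_one_iff]
    linarith
  have key : ∀ f : ℕ → ℕ, Set.InjOn f (Finset.Icc s t) →
      (∀ r ∈ Finset.Icc s t, θ * ρ₁ * ((r : ℝ) - (s : ℝ)) + θ * ρ₂ * ((t : ℝ) - (r : ℝ))
        = θ * max ρ₁ ρ₂ * ((t : ℝ) - (s : ℝ)) + (f r : ℝ) * (-θ * |ρ₁ - ρ₂|)) →
      ∑ r ∈ Finset.Icc s t,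
        Real.exp (θ * ρ₁ * ((r : ℝ) - (s : ℝ)) + θ * ρ₂ * ((t : ℝ) - (r : ℝ)))
      ≤ Real.exp (θ * max ρ₁ ρ₂ * ((t : ℝ) - (s : ℝ)))
          * (1 - Real.exp (-θ * |ρ₁ - ρ₂|))⁻¹ := by
    intro f hf heq
    refine le_trans (le_of_eq ?_) (mul_le_mul_of_nonneg_left
      (sum_pow_le_of_injOn (Real.exp_pos _).le hq1 _ f hf) (Real.exp_pos _).le)
    rw [Finset.mul_sum]
    refine Finset.sum_congr rfl fun r hr => ?_
    rw [heq r hr, Real.exp_add, Real.exp_nat_mul]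
  rcases lt_or_gt_of_ne hne with h | h
  · refine key (fun r => r - s) ?_ ?_
    · intro a ha b hb hab
      simp only [Finset.coe_Icc, Set.mem_Icc] at ha hb hab
      omega
    · intro r hr
      rw [max_eq_right h.le, abs_of_neg (sub_neg.mpr h), Nat.cast_sub (Finset.mem_Icc.mp hr).1]
      ring
  · refine key (fun r => t - r) ?_ ?_
    · intro a ha b hb hab
      simp only [Finset.coe_Icc, Set.mem_Icc] at ha hb hab
      omega
    · intro r hr
      rw [max_eq_left h.le, abs_of_pos (sub_pos.mpr h), Nat.cast_sub (Finset.mem_Icc.mp hr).2]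
      ring

/-- Convolution of two stochastically independent MGF-bounded service processes. -/
theorem convolution_independent
    {Ω : Type*} [MeasurableSpace Ω] (P : Measure Ω) [IsProbabilityMeasure P]
    (θ : ℝ) (hθ : 0 < θ)
    (U₁ U₂ : ℕ → ℕ → Ω → ℝ)
    (ρ₁ σ₁ ρ₂ σ₂ : ℝ)
    -- U₁ and U₂ are service processes
    (hU₁meas : ∀ s t, Measurable (U₁ s t))
    (hU₁nonneg : ∀ s t, s ≤ t → ∀ ω, 0 ≤ U₁ s t ω)
    (hU₂meas : ∀ s t, Measurable (U₂ s t))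
    (hU₂nonneg : ∀ s t, s ≤ t → ∀ ω, 0 ≤ U₂ s t ω)
    -- MGF bounds
    (hU₁bound : ∀ s t, s ≤ t →
      ∫⁻ ω, ENNReal.ofReal (Real.exp (-θ * U₁ s t ω)) ∂P
        ≤ ENNReal.ofReal (Real.exp (θ * ρ₁ * ((t : ℝ) - (s : ℝ)) + θ * σ₁)))
    (hU₂bound : ∀ s t, s ≤ t →
      ∫⁻ ω, ENNReal.ofReal (Real.exp (-θ * U₂ s t ω)) ∂P
        ≤ ENNReal.ofReal (Real.exp (θ * ρ₂ * ((t : ℝ) - (s : ℝ)) + θ * σ₂)))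
    -- the rates differ
    (hne : ρ₁ ≠ ρ₂)
    -- stochastic independence of U₁ and U₂
    (hIndep : Indep (⨆ p : ℕ × ℕ, MeasurableSpace.comap (U₁ p.1 p.2) inferInstance)
      (⨆ p : ℕ × ℕ, MeasurableSpace.comap (U₂ p.1 p.2) inferInstance) P) :
    ∀ s t, s ≤ t →
      ∫⁻ ω, ENNReal.ofReal
          (Real.exp (-θ * sInf ((fun r => U₁ s r ω + U₂ r t ω) '' Set.Icc s t))) ∂P
        ≤ ENNReal.ofReal (Real.exp (θ * max ρ₁ ρ₂ * ((t : ℝ) - (s : ℝ))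
            + θ * (σ₁ + σ₂ - 1 / θ * Real.log (1 - Real.exp (-θ * |ρ₁ - ρ₂|))))) := by
  intro s t hst
  have hmin : ∀ ω, ENNReal.ofReal
      (Real.exp (-θ * sInf ((fun r => U₁ s r ω + U₂ r t ω) '' Set.Icc s t)))
      ≤ ∑ r ∈ Finset.Icc s t, ENNReal.ofReal (Real.exp (-θ * U₁ s r ω))
          * ENNReal.ofReal (Real.exp (-θ * U₂ r t ω)) := by
    intro ω
    have hne' : ((fun r => U₁ s r ω + U₂ r t ω) '' Set.Icc s t).Nonempty :=
      (Set.nonempty_Icc.mpr hst).image _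
    obtain ⟨r, hr, hrm⟩ := hne'.csInf_mem ((Set.finite_Icc s t).image _)
    rw [← hrm]
    refine le_trans (le_of_eq ?_) (Finset.single_le_sum
      (f := fun r => ENNReal.ofReal (Real.exp (-θ * U₁ s r ω))
          * ENNReal.ofReal (Real.exp (-θ * U₂ r t ω)))
      (fun _ _ => zero_le) (Finset.mem_Icc.mpr hr))
    simp only
    rw [← ENNReal.ofReal_mul (Real.exp_pos _).le, ← Real.exp_add, mul_add]
  have hexp : Measurable fun x : ℝ => ENNReal.ofReal (Real.exp (-θ * x)) := by fun_prop
  have hterm : ∀ r ∈ Finset.Icc s t,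
      ∫⁻ ω, ENNReal.ofReal (Real.exp (-θ * U₁ s r ω))
          * ENNReal.ofReal (Real.exp (-θ * U₂ r t ω)) ∂P
      ≤ ENNReal.ofReal (Real.exp (θ * (σ₁ + σ₂))
          * Real.exp (θ * ρ₁ * ((r : ℝ) - (s : ℝ)) + θ * ρ₂ * ((t : ℝ) - (r : ℝ)))) := by
    intro r hr
    obtain ⟨hsr, hrt⟩ := Finset.mem_Icc.mp hr
    have h₁ := hexp.comp (Measurable.mono (comap_measurable (U₁ s r))
      (le_iSup (fun p : ℕ × ℕ => MeasurableSpace.comap (U₁ p.1 p.2) inferInstance) (s, r)) le_rfl)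
    have h₂ := hexp.comp (Measurable.mono (comap_measurable (U₂ r t))
      (le_iSup (fun p : ℕ × ℕ => MeasurableSpace.comap (U₂ p.1 p.2) inferInstance) (r, t)) le_rfl)
    have hprod := lintegral_mul_eq_lintegral_mul_lintegral_of_independent_measurableSpace
      (iSup_le fun p : ℕ × ℕ => (hU₁meas p.1 p.2).comap_le)
      (iSup_le fun p : ℕ × ℕ => (hU₂meas p.1 p.2).comap_le) hIndep h₁ h₂
    simp only [Function.comp_apply] at hprod
    rw [hprod]
    refine (mul_le_mul' (hU₁bound s r hsr) (hU₂bound r t hrt)).trans (le_of_eq ?_)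
    rw [← ENNReal.ofReal_mul (Real.exp_pos _).le, ← Real.exp_add, ← Real.exp_add]
    congr 2
    ring
  have hq : 0 < 1 - Real.exp (-θ * |ρ₁ - ρ₂|) := by
    have := mul_pos hθ (abs_pos.mpr (sub_ne_zero.mpr hne))
    rw [sub_pos, Real.exp_lt_one_iff]
    linarith
  calc _ ≤ ∫⁻ ω, ∑ r ∈ Finset.Icc s t, ENNReal.ofReal (Real.exp (-θ * U₁ s r ω))
          * ENNReal.ofReal (Real.exp (-θ * U₂ r t ω)) ∂P := lintegral_mono hmin
    _ = ∑ r ∈ Finset.Icc s t, ∫⁻ ω, ENNReal.ofReal (Real.exp (-θ * U₁ s r ω))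
          * ENNReal.ofReal (Real.exp (-θ * U₂ r t ω)) ∂P :=
        lintegral_finsetSum _ fun r _ =>
          (hexp.comp (hU₁meas s r)).mul (hexp.comp (hU₂meas r t))
    _ ≤ _ := Finset.sum_le_sum hterm
    _ = ENNReal.ofReal (Real.exp (θ * (σ₁ + σ₂)) * ∑ r ∈ Finset.Icc s t,
          Real.exp (θ * ρ₁ * ((r : ℝ) - (s : ℝ)) + θ * ρ₂ * ((t : ℝ) - (r : ℝ)))) := by
        rw [Finset.mul_sum, ENNReal.ofReal_sum_of_nonneg]
        intros
        positivity
    _ ≤ ENNReal.ofReal (Real.exp (θ * (σ₁ + σ₂))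
          * (Real.exp (θ * max ρ₁ ρ₂ * ((t : ℝ) - (s : ℝ)))
            * (1 - Real.exp (-θ * |ρ₁ - ρ₂|))⁻¹)) :=
        ENNReal.ofReal_le_ofReal (mul_le_mul_of_nonneg_left (sum_exp_rates_le hθ hne s t)
          (Real.exp_pos _).le)
    _ = _ := by
        have hlog : θ * (σ₁ + σ₂ - 1 / θ * Real.log (1 - Real.exp (-θ * |ρ₁ - ρ₂|)))
            = θ * (σ₁ + σ₂) + -Real.log (1 - Real.exp (-θ * |ρ₁ - ρ₂|)) := by
          field_simp
          ring
        rw [hlog, Real.exp_add, Real.exp_add (θ * (σ₁ + σ₂)), Real.exp_neg, Real.exp_log hq]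
        congr 1
        ring
end

section
/- (Leftover service under arbitrary multiplexing, independent case.) Let θ > 0. Let A be a flow and U a service process on a common probability space, stochastically independent, with A MGF-bounded for θ with bounding functions (ρ_A, σ_A) and U MGF-bounded for θ with bounding functions (ρ_U, σ_U). Then the leftover service process U_l(s,t) := max(U(s,t) − A(s,t), 0) is MGF-bounded for θ with bounding functions ρ(θ) = ρ_A(θ) + ρ_U(θ) and σ(θ) = σ_A(θ) + σ_U(θ); that is, E[e^{−θ U_l(s,t)}] ≤ e^{θ(ρ_A(θ)+ρ_U(θ))(t−s) + θ(σ_A(θ)+σ_U(θ))} for all s ≤ t. -/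
/-!
Since `max x 0 ≥ x` and `θ > 0`, the integrand `exp (-θ U_l(s,t))` is at most
`exp (θ A(s,t)) * exp (-θ U(s,t))`. The two factors are measurable with respect to the independent
σ-algebras generated by `A` and `U`, so the expectation of the product is the product of the
expectations, and the two MGF bounds multiply.
-/

open MeasureTheory ProbabilityTheory

lemma measurable_iSup_comap {Ω ι : Type*} (X : ι → Ω → ℝ) (i : ι) :
    Measurable[⨆ j, MeasurableSpace.comap (X j) inferInstance] (X i) :=
  (comap_measurable (X i)).mono
    (le_iSup (fun j => MeasurableSpace.comap (X j) inferInstance) i) le_rfl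

lemma iSup_comap_le {Ω ι : Type*} {m : MeasurableSpace Ω} (X : ι → Ω → ℝ)
    (hX : ∀ i, Measurable (X i)) :
    ⨆ j, MeasurableSpace.comap (X j) inferInstance ≤ m :=
  iSup_le fun j => (hX j).comap_le

/-- Factorization of the joint exponential moment over independent σ-algebras; no integrability
is needed because the expectations take values in `[0, ∞]`. -/
lemma lintegral_exp_mul_exp {Ω : Type*} {m₁ m₂ m : MeasurableSpace Ω} (P : Measure[m] Ω)
    (θ : ℝ) {X Y V : Ω → ℝ} (hind : Indep m₁ m₂ P) (h₁ : m₁ ≤ m) (h₂ : m₂ ≤ m)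
    (hX : Measurable[m₁] X) (hY : Measurable[m₁] Y) (hV : Measurable[m₂] V) :
    ∫⁻ ω, ENNReal.ofReal (Real.exp (θ * (X ω - Y ω)))
        * ENNReal.ofReal (Real.exp (-θ * V ω)) ∂P
      = (∫⁻ ω, ENNReal.ofReal (Real.exp (θ * (X ω - Y ω))) ∂P)
        * ∫⁻ ω, ENNReal.ofReal (Real.exp (-θ * V ω)) ∂P := by
  have hf : Measurable[m₁] fun ω => ENNReal.ofReal (Real.exp (θ * (X ω - Y ω))) :=
    Measurable.ennreal_ofReal (Real.measurable_exp.comp ((hX.sub hY).const_mul θ))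
  have hg : Measurable[m₂] fun ω => ENNReal.ofReal (Real.exp (-θ * V ω)) :=
    Measurable.ennreal_ofReal (Real.measurable_exp.comp (hV.const_mul (-θ)))
  exact lintegral_mul_eq_lintegral_mul_lintegral_of_independent_measurableSpace
    h₁ h₂ hind hf hg

/-- Leftover service under arbitrary multiplexing (strict priority), independent case. -/
theorem leftover_independent
    {Ω : Type*} [MeasurableSpace Ω] (P : Measure Ω) [IsProbabilityMeasure P]
    (θ : ℝ) (hθ : 0 < θ)
    (A : ℕ → Ω → ℝ) (U : ℕ → ℕ → Ω → ℝ)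
    (ρA σA ρU σU : ℝ)
    -- A is a flow
    (hAmeas : ∀ t, Measurable (A t))
    (hAmono : ∀ ω, Monotone fun t => A t ω)
    (hAzero : ∀ ω, A 0 ω = 0)
    -- U is a service process
    (hUmeas : ∀ s t, Measurable (U s t))
    (hUnonneg : ∀ s t, s ≤ t → ∀ ω, 0 ≤ U s t ω)
    -- MGF bounds
    (hAbound : ∀ s t, s ≤ t →
      ∫⁻ ω, ENNReal.ofReal (Real.exp (θ * (A t ω - A s ω))) ∂P
        ≤ ENNReal.ofReal (Real.exp (θ * ρA * ((t : ℝ) - (s : ℝ)) + θ * σA)))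
    (hUbound : ∀ s t, s ≤ t →
      ∫⁻ ω, ENNReal.ofReal (Real.exp (-θ * U s t ω)) ∂P
        ≤ ENNReal.ofReal (Real.exp (θ * ρU * ((t : ℝ) - (s : ℝ)) + θ * σU)))
    -- stochastic independence of A and U
    (hIndep : Indep (⨆ t, MeasurableSpace.comap (A t) inferInstance)
      (⨆ p : ℕ × ℕ, MeasurableSpace.comap (U p.1 p.2) inferInstance) P) :
    -- the leftover service U_l(s,t) = [U(s,t) − A(s,t)]⁺ is MGF-bounded with
    -- ρ = ρA + ρU and σ = σA + σU
    ∀ s t, s ≤ t →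
      ∫⁻ ω, ENNReal.ofReal (Real.exp (-θ * max (U s t ω - (A t ω - A s ω)) 0)) ∂P
        ≤ ENNReal.ofReal (Real.exp (θ * (ρA + ρU) * ((t : ℝ) - (s : ℝ))
            + θ * (σA + σU))) := by
  intro s t hst
  have hprod := lintegral_exp_mul_exp P θ hIndep (iSup_comap_le A hAmeas)
    (iSup_comap_le (fun p : ℕ × ℕ => U p.1 p.2) fun p => hUmeas p.1 p.2)
    (measurable_iSup_comap A t) (measurable_iSup_comap A s)
    (measurable_iSup_comap (fun p : ℕ × ℕ => U p.1 p.2) (s, t))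
  calc ∫⁻ ω, ENNReal.ofReal (Real.exp (-θ * max (U s t ω - (A t ω - A s ω)) 0)) ∂P
      ≤ ∫⁻ ω, ENNReal.ofReal (Real.exp (θ * (A t ω - A s ω)))
          * ENNReal.ofReal (Real.exp (-θ * U s t ω)) ∂P := by
        refine lintegral_mono fun ω => ?_
        rw [← ENNReal.ofReal_mul (Real.exp_nonneg _), ← Real.exp_add]
        refine ENNReal.ofReal_le_ofReal (Real.exp_le_exp.mpr ?_)
        have h := mul_le_mul_of_nonneg_left
          (le_max_left (U s t ω - (A t ω - A s ω)) 0) hθ.le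
        linarith
    _ = (∫⁻ ω, ENNReal.ofReal (Real.exp (θ * (A t ω - A s ω))) ∂P)
          * ∫⁻ ω, ENNReal.ofReal (Real.exp (-θ * U s t ω)) ∂P := hprod
    _ ≤ ENNReal.ofReal (Real.exp (θ * ρA * ((t : ℝ) - (s : ℝ)) + θ * σA))
          * ENNReal.ofReal (Real.exp (θ * ρU * ((t : ℝ) - (s : ℝ)) + θ * σU)) :=
        mul_le_mul' (hAbound s t hst) (hUbound s t hst)
    _ = _ := by
        rw [← ENNReal.ofReal_mul (Real.exp_nonneg _), ← Real.exp_add]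
        congr 2
        ring
end

section
/- (Output bound / deconvolution, independent case.) Let θ > 0. Let A be a flow and U a service process on a common probability space, stochastically independent, with A MGF-bounded for θ with bounding functions (ρ_A, σ_A) and U MGF-bounded for θ with bounding functions (ρ_U, σ_U). Let B be the output of a dynamic U-server with input A. If ρ_A(θ) + ρ_U(θ) < 0, then for all s ≤ t: E[e^{θ B(s,t)}] ≤ e^{θρ_A(θ)(t−s) + θ(σ_A(θ)+σ_U(θ))} / (1 − e^{θ(ρ_A(θ)+ρ_U(θ))}); in particular B is MGF-bounded for θ with bounding functions ρ_B(θ) = ρ_A(θ) and σ_B(θ) = σ_A(θ) + σ_U(θ) − (1/θ)·log(1 − e^{θ(ρ_A(θ)+ρ_U(θ))}). -/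
open MeasureTheory ProbabilityTheory

/-!
Since `B t ≤ A t`, and since the finite minimum in the server inequality at time `s` is attained at
some `r ≤ s`, every outcome satisfies `B t - B s ≤ (A t - A r) - U r s`
(`exists_output_increment_le`). Hence `exp (θ (B t - B s))` is at most the sum over `r ≤ s` of
`exp (θ (A t - A r)) * exp (-θ U r s)`. By independence the expectation of each product factors, and
the two MGF bounds make it at most `exp (θ ρA (t - s) + θ (σA + σU)) * q ^ (s - r)` with
`q = exp (θ (ρA + ρU)) < 1`; summing the geometric series gives the claim.
-/

/-- Sample-path bound: the burst of the output over `[s, t]` is controlled by the deconvolution of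
arrivals and service, attained at the minimizer `r` of the server inequality. -/
lemma exists_output_increment_le {a b u : ℕ → ℝ} {s t : ℕ}
    (hserver : sInf ((fun r => a r + u r) '' Set.Icc 0 s) ≤ b s) (hle : b t ≤ a t) :
    ∃ r ∈ Finset.range (s + 1), b t - b s ≤ (a t - a r) - u r := by
  have hne : ((fun r => a r + u r) '' Set.Icc 0 s).Nonempty := ⟨_, 0, by simp, rfl⟩
  obtain ⟨r, hr, hreq⟩ := hne.csInf_mem ((Set.finite_Icc 0 s).image _)
  rw [← hreq] at hserver
  refine ⟨r, Finset.mem_range.2 (Nat.lt_succ_of_le hr.2), ?_⟩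
  simp only at hserver
  linarith

lemma geom_sum_le_one_div {q : ℝ} (hq0 : 0 ≤ q) (hq1 : q < 1) (n : ℕ) :
    ∑ k ∈ Finset.range n, q ^ k ≤ 1 / (1 - q) := by
  rw [le_div_iff₀ (sub_pos.2 hq1), geom_sum_mul_neg]
  linarith [pow_nonneg hq0 n]

/-- Output bound (deconvolution), independent case. -/
theorem output_bound_independent
    {Ω : Type*} [MeasurableSpace Ω] (P : Measure Ω) [IsProbabilityMeasure P]
    (θ : ℝ) (hθ : 0 < θ)
    (A B : ℕ → Ω → ℝ) (U : ℕ → ℕ → Ω → ℝ)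
    (ρA σA ρU σU : ℝ)
    -- A is a flow
    (hAmeas : ∀ t, Measurable (A t))
    (hAmono : ∀ ω, Monotone fun t => A t ω)
    (hAzero : ∀ ω, A 0 ω = 0)
    -- U is a service process
    (hUmeas : ∀ s t, Measurable (U s t))
    (hUnonneg : ∀ s t, s ≤ t → ∀ ω, 0 ≤ U s t ω)
    -- MGF bounds
    (hAbound : ∀ s t, s ≤ t →
      ∫⁻ ω, ENNReal.ofReal (Real.exp (θ * (A t ω - A s ω))) ∂P
        ≤ ENNReal.ofReal (Real.exp (θ * ρA * ((t : ℝ) - (s : ℝ)) + θ * σA)))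
    (hUbound : ∀ s t, s ≤ t →
      ∫⁻ ω, ENNReal.ofReal (Real.exp (-θ * U s t ω)) ∂P
        ≤ ENNReal.ofReal (Real.exp (θ * ρU * ((t : ℝ) - (s : ℝ)) + θ * σU)))
    -- stochastic independence of A and U
    (hIndep : Indep (⨆ t, MeasurableSpace.comap (A t) inferInstance)
      (⨆ p : ℕ × ℕ, MeasurableSpace.comap (U p.1 p.2) inferInstance) P)
    -- B is the output of a dynamic U-server with input A (and is a flow)
    (hBmeas : ∀ t, Measurable (B t))
    (hBmono : ∀ ω, Monotone fun t => B t ω)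
    (hBzero : ∀ ω, B 0 ω = 0)
    (hServer : ∀ t ω, sInf ((fun s => A s ω + U s t ω) '' Set.Icc 0 t) ≤ B t ω)
    (hBleA : ∀ t ω, B t ω ≤ A t ω)
    -- stability condition
    (hstab : ρA + ρU < 0) :
    ∀ s t, s ≤ t →
      ∫⁻ ω, ENNReal.ofReal (Real.exp (θ * (B t ω - B s ω))) ∂P
        ≤ ENNReal.ofReal (Real.exp (θ * ρA * ((t : ℝ) - (s : ℝ)) + θ * (σA + σU))
            / (1 - Real.exp (θ * (ρA + ρU)))) := by
  intro s t hst
  -- The two factors are measurable for the sub-σ-algebras generated by `A` and by `U`.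
  have hfactor : ∀ r, ∫⁻ ω, ENNReal.ofReal (Real.exp (θ * (A t ω - A r ω)))
        * ENNReal.ofReal (Real.exp (-θ * U r s ω)) ∂P
      = (∫⁻ ω, ENNReal.ofReal (Real.exp (θ * (A t ω - A r ω))) ∂P)
        * ∫⁻ ω, ENNReal.ofReal (Real.exp (-θ * U r s ω)) ∂P := by
    intro r
    have hA : ∀ k, Measurable[⨆ t, MeasurableSpace.comap (A t) inferInstance] (A k) := fun k =>
      (comap_measurable (A k)).mono (le_iSup (fun t => MeasurableSpace.comap (A t) inferInstance) k)
        le_rfl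
    have hU : Measurable[⨆ p : ℕ × ℕ, MeasurableSpace.comap (U p.1 p.2) inferInstance] (U r s) :=
      (comap_measurable (U r s)).mono
        (le_iSup (fun p : ℕ × ℕ => MeasurableSpace.comap (U p.1 p.2) inferInstance) (r, s)) le_rfl
    have hmA : (⨆ t, MeasurableSpace.comap (A t) inferInstance) ≤ ‹MeasurableSpace Ω› :=
      iSup_le fun k => (hAmeas k).comap_le
    have hmU : (⨆ p : ℕ × ℕ, MeasurableSpace.comap (U p.1 p.2) inferInstance)
        ≤ ‹MeasurableSpace Ω› :=
      iSup_le fun p => (hUmeas p.1 p.2).comap_le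
    refine lintegral_mul_eq_lintegral_mul_lintegral_of_independent_measurableSpace
      (f := fun ω => ENNReal.ofReal (Real.exp (θ * (A t ω - A r ω))))
      (g := fun ω => ENNReal.ofReal (Real.exp (-θ * U r s ω))) hmA hmU hIndep ?_ ?_
    · have h : Measurable fun p : ℝ × ℝ => ENNReal.ofReal (Real.exp (θ * (p.1 - p.2))) := by
        fun_prop
      exact h.comp ((hA t).prodMk (hA r))
    · have h : Measurable fun x : ℝ => ENNReal.ofReal (Real.exp (-θ * x)) := by fun_prop
      exact h.comp hU
  have hq1 : Real.exp (θ * (ρA + ρU)) < 1 :=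
    Real.exp_zero ▸ Real.exp_lt_exp.2 (mul_neg_of_pos_of_neg hθ hstab)
  set q := Real.exp (θ * (ρA + ρU)) with hq
  set C := Real.exp (θ * ρA * ((t : ℝ) - (s : ℝ)) + θ * (σA + σU)) with hC
  have hC0 : 0 ≤ C := (Real.exp_pos _).le
  have hq0 : 0 ≤ q := (Real.exp_pos _).le
  have hterm : ∀ r ∈ Finset.range (s + 1),
      ∫⁻ ω, ENNReal.ofReal (Real.exp (θ * (A t ω - A r ω)))
        * ENNReal.ofReal (Real.exp (-θ * U r s ω)) ∂P ≤ ENNReal.ofReal (C * q ^ (s - r)) := by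
    intro r hr
    have hrs : r ≤ s := Nat.le_of_lt_succ (Finset.mem_range.1 hr)
    rw [hfactor r]
    refine (mul_le_mul' (hAbound r t (hrs.trans hst)) (hUbound r s hrs)).trans_eq ?_
    rw [← ENNReal.ofReal_mul (Real.exp_pos _).le, ← Real.exp_add, hC, hq, ← Real.exp_nat_mul,
      ← Real.exp_add, Nat.cast_sub hrs]
    congr 2
    ring
  calc ∫⁻ ω, ENNReal.ofReal (Real.exp (θ * (B t ω - B s ω))) ∂P
      ≤ ∫⁻ ω, ∑ r ∈ Finset.range (s + 1), ENNReal.ofReal (Real.exp (θ * (A t ω - A r ω)))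
          * ENNReal.ofReal (Real.exp (-θ * U r s ω)) ∂P := by
        refine lintegral_mono fun ω => ?_
        obtain ⟨r, hr, hle⟩ := exists_output_increment_le (a := fun k => A k ω)
          (b := fun k => B k ω) (u := fun k => U k s ω) (hServer s ω) (hBleA t ω)
        refine le_trans ?_ (Finset.single_le_sum (fun _ _ => zero_le) hr)
        rw [← ENNReal.ofReal_mul (Real.exp_pos _).le, ← Real.exp_add]
        refine ENNReal.ofReal_le_ofReal (Real.exp_le_exp.2 ?_)
        linarith [mul_le_mul_of_nonneg_left hle hθ.le]
    _ = ∑ r ∈ Finset.range (s + 1), ∫⁻ ω, ENNReal.ofReal (Real.exp (θ * (A t ω - A r ω)))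
          * ENNReal.ofReal (Real.exp (-θ * U r s ω)) ∂P :=
        lintegral_finsetSum _ fun r _ => by fun_prop
    _ ≤ ∑ r ∈ Finset.range (s + 1), ENNReal.ofReal (C * q ^ (s - r)) := Finset.sum_le_sum hterm
    _ = ENNReal.ofReal (C * ∑ k ∈ Finset.range (s + 1), q ^ k) := by
        rw [← ENNReal.ofReal_sum_of_nonneg fun r _ => mul_nonneg hC0 (pow_nonneg hq0 _),
          ← Finset.mul_sum, ← Finset.sum_range_reflect (fun k => q ^ k)]
        simp
    _ ≤ ENNReal.ofReal (C / (1 - q)) := by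
        rw [div_eq_mul_one_div C]
        exact ENNReal.ofReal_le_ofReal
          (mul_le_mul_of_nonneg_left (geom_sum_le_one_div hq0 hq1 _) hC0)
end

section
/- (Multiplexing, dependent case.) Let θ > 0 and let p, q > 1 with 1/p + 1/q = 1. Let A₁ and A₂ be flows on a common probability space (not assumed independent), with A₁ MGF-bounded for pθ with bounding functions (ρ₁, σ₁) and A₂ MGF-bounded for qθ with bounding functions (ρ₂, σ₂). Then the aggregate A := A₁ + A₂ is MGF-bounded for θ with bounding functions ρ(θ) = ρ₁(pθ) + ρ₂(qθ) and σ(θ) = σ₁(pθ) + σ₂(qθ); that is, E[e^{θ(A₁(s,t)+A₂(s,t))}] ≤ e^{θ(ρ₁(pθ)+ρ₂(qθ))(t−s) + θ(σ₁(pθ)+σ₂(qθ))} for all s ≤ t. -/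
open MeasureTheory ProbabilityTheory

/-! Hölder's inequality for the conjugate exponents `p, q`, applied to the exponentials
`exp (θ A₁(s,t))` and `exp (θ A₂(s,t))`, bounds the MGF of the aggregate at `θ` by
`E[exp (pθ A₁(s,t))]^(1/p) * E[exp (qθ A₂(s,t))]^(1/q)`; after inserting the hypotheses, the
exponents `1/p` and `1/q` cancel the factors `p` and `q` in the two bounds. -/

theorem ofReal_exp_rpow (x r : ℝ) :
    ENNReal.ofReal (Real.exp x) ^ r = ENNReal.ofReal (Real.exp (x * r)) := by
  rw [ENNReal.ofReal_rpow_of_pos (Real.exp_pos x), ← Real.exp_mul]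

/-- Multiplexing, dependent case: with Hölder parameters `p, q`,
if `A₁` is MGF-bounded for `pθ` with values `(ρ₁, σ₁) = (ρ₁(pθ), σ₁(pθ))` and
`A₂` is MGF-bounded for `qθ` with values `(ρ₂, σ₂) = (ρ₂(qθ), σ₂(qθ))`, then the
aggregate is MGF-bounded for `θ` with `ρ = ρ₁ + ρ₂` and `σ = σ₁ + σ₂`. -/
theorem multiplexing_dependent
    {Ω : Type*} [MeasurableSpace Ω] (P : Measure Ω) [IsProbabilityMeasure P]
    (θ : ℝ) (hθ : 0 < θ)
    (p q : ℝ) (hp : 1 < p) (hq : 1 < q) (hpq : 1 / p + 1 / q = 1)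
    (A₁ A₂ : ℕ → Ω → ℝ)
    (ρ₁ σ₁ ρ₂ σ₂ : ℝ)
    -- A₁ and A₂ are flows
    (hA₁meas : ∀ t, Measurable (A₁ t))
    (hA₁mono : ∀ ω, Monotone fun t => A₁ t ω)
    (hA₁zero : ∀ ω, A₁ 0 ω = 0)
    (hA₂meas : ∀ t, Measurable (A₂ t))
    (hA₂mono : ∀ ω, Monotone fun t => A₂ t ω)
    (hA₂zero : ∀ ω, A₂ 0 ω = 0)
    -- A₁ is MGF-bounded for pθ, A₂ is MGF-bounded for qθ
    (hA₁bound : ∀ s t, s ≤ t →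
      ∫⁻ ω, ENNReal.ofReal (Real.exp (p * θ * (A₁ t ω - A₁ s ω))) ∂P
        ≤ ENNReal.ofReal (Real.exp (p * θ * ρ₁ * ((t : ℝ) - (s : ℝ)) + p * θ * σ₁)))
    (hA₂bound : ∀ s t, s ≤ t →
      ∫⁻ ω, ENNReal.ofReal (Real.exp (q * θ * (A₂ t ω - A₂ s ω))) ∂P
        ≤ ENNReal.ofReal (Real.exp (q * θ * ρ₂ * ((t : ℝ) - (s : ℝ)) + q * θ * σ₂))) :
    ∀ s t, s ≤ t →
      ∫⁻ ω, ENNReal.ofReal (Real.exp (θ * ((A₁ t ω - A₁ s ω) + (A₂ t ω - A₂ s ω)))) ∂P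
        ≤ ENNReal.ofReal (Real.exp (θ * (ρ₁ + ρ₂) * ((t : ℝ) - (s : ℝ)) + θ * (σ₁ + σ₂))) := by
  intro s t hst
  have hconj : p.HolderConjugate q :=
    Real.holderConjugate_iff.mpr ⟨hp, by simpa only [one_div] using hpq⟩
  have hp0 : p ≠ 0 := by positivity
  have hq0 : q ≠ 0 := by positivity
  have hmeas : ∀ A : ℕ → Ω → ℝ, (∀ t, Measurable (A t)) →
      Measurable fun ω => ENNReal.ofReal (Real.exp (θ * (A t ω - A s ω))) := fun A hA =>
    (Real.measurable_exp.comp (((hA t).sub (hA s)).const_mul θ)).ennreal_ofReal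
  have hpow : ∀ r x : ℝ, ENNReal.ofReal (Real.exp (θ * x)) ^ r
      = ENNReal.ofReal (Real.exp (r * θ * x)) := fun r x => by
    rw [ofReal_exp_rpow]
    ring_nf
  have hroot : ∀ r ρ σ : ℝ, r ≠ 0 →
      ENNReal.ofReal (Real.exp (r * θ * ρ * ((t : ℝ) - (s : ℝ)) + r * θ * σ)) ^ (1 / r)
        = ENNReal.ofReal (Real.exp (θ * ρ * ((t : ℝ) - (s : ℝ)) + θ * σ)) := by
    intro r ρ σ hr
    rw [ofReal_exp_rpow]
    congr 2
    field_simp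
  have holder := ENNReal.lintegral_mul_le_Lp_mul_Lq P hconj
    (hmeas A₁ hA₁meas).aemeasurable (hmeas A₂ hA₂meas).aemeasurable
  simp only [Pi.mul_apply, hpow, ← ENNReal.ofReal_mul (Real.exp_nonneg _), ← Real.exp_add,
    ← mul_add] at holder
  refine holder.trans ?_
  have h₁ := ENNReal.rpow_le_rpow (hA₁bound s t hst) (by positivity : 0 ≤ 1 / p)
  have h₂ := ENNReal.rpow_le_rpow (hA₂bound s t hst) (by positivity : 0 ≤ 1 / q)
  rw [hroot p ρ₁ σ₁ hp0] at h₁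
  rw [hroot q ρ₂ σ₂ hq0] at h₂
  refine (mul_le_mul' h₁ h₂).trans_eq ?_
  rw [← ENNReal.ofReal_mul (Real.exp_nonneg _), ← Real.exp_add]
  ring_nf
end

section
/- (Leftover service, dependent case.) Let θ > 0 and let p, q > 1 with 1/p + 1/q = 1. Let A be a flow and U a service process on a common probability space (not assumed independent), with A MGF-bounded for pθ with bounding functions (ρ_A, σ_A) and U MGF-bounded for qθ with bounding functions (ρ_U, σ_U). Then the leftover service process U_l(s,t) := max(U(s,t) − A(s,t), 0) is MGF-bounded for θ with bounding functions ρ(θ) = ρ_A(pθ) + ρ_U(qθ) and σ(θ) = σ_A(pθ) + σ_U(qθ). -/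
/-!
Dropping the positive part only increases the exponential, so pointwise
`exp (-θ [U - A]⁺) ≤ exp (θ A) * exp (-θ U)`. Hölder's inequality with exponents `p, q` bounds the
expectation of the product, without any independence, by
`E[exp (pθ A)] ^ (1/p) * E[exp (-qθ U)] ^ (1/q)`, and the roots `1/p`, `1/q` cancel the factors
`p`, `q` in the exponents of the two assumed bounds.
-/

open MeasureTheory ProbabilityTheory

/-- Leftover service, dependent case: with Hölder parameters `p, q`,
if `A` is MGF-bounded for `pθ` with values `(ρA, σA) = (ρ_A(pθ), σ_A(pθ))` and
`U` is MGF-bounded for `qθ` with values `(ρU, σU) = (ρ_U(qθ), σ_U(qθ))`, then the leftover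
service `U_l(s,t) = [U(s,t) − A(s,t)]⁺` is MGF-bounded for `θ` with `ρ = ρA + ρU`,
`σ = σA + σU`. -/
theorem leftover_dependent
    {Ω : Type*} [MeasurableSpace Ω] (P : Measure Ω) [IsProbabilityMeasure P]
    (θ : ℝ) (hθ : 0 < θ)
    (p q : ℝ) (hp : 1 < p) (hq : 1 < q) (hpq : 1 / p + 1 / q = 1)
    (A : ℕ → Ω → ℝ) (U : ℕ → ℕ → Ω → ℝ)
    (ρA σA ρU σU : ℝ)
    -- A is a flow
    (hAmeas : ∀ t, Measurable (A t))
    (hAmono : ∀ ω, Monotone fun t => A t ω)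
    (hAzero : ∀ ω, A 0 ω = 0)
    -- U is a service process
    (hUmeas : ∀ s t, Measurable (U s t))
    (hUnonneg : ∀ s t, s ≤ t → ∀ ω, 0 ≤ U s t ω)
    -- A is MGF-bounded for pθ, U is MGF-bounded for qθ
    (hAbound : ∀ s t, s ≤ t →
      ∫⁻ ω, ENNReal.ofReal (Real.exp (p * θ * (A t ω - A s ω))) ∂P
        ≤ ENNReal.ofReal (Real.exp (p * θ * ρA * ((t : ℝ) - (s : ℝ)) + p * θ * σA)))
    (hUbound : ∀ s t, s ≤ t →
      ∫⁻ ω, ENNReal.ofReal (Real.exp (-(q * θ) * U s t ω)) ∂P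
        ≤ ENNReal.ofReal (Real.exp (q * θ * ρU * ((t : ℝ) - (s : ℝ)) + q * θ * σU))) :
    ∀ s t, s ≤ t →
      ∫⁻ ω, ENNReal.ofReal (Real.exp (-θ * max (U s t ω - (A t ω - A s ω)) 0)) ∂P
        ≤ ENNReal.ofReal (Real.exp (θ * (ρA + ρU) * ((t : ℝ) - (s : ℝ))
            + θ * (σA + σU))) := by
  intro s t hst
  have hconj : p.HolderConjugate q := by
    rw [Real.holderConjugate_iff]
    exact ⟨hp, by simpa only [one_div] using hpq⟩
  have hp0 : p ≠ 0 := by positivity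
  have hq0 : q ≠ 0 := by positivity
  have hpow : ∀ x r : ℝ, ENNReal.ofReal (Real.exp x) ^ r = ENNReal.ofReal (Real.exp (x * r)) := by
    intro x r
    rw [ENNReal.ofReal_rpow_of_pos (Real.exp_pos x), Real.exp_mul]
  set f : Ω → ENNReal := fun ω => ENNReal.ofReal (Real.exp (θ * (A t ω - A s ω))) with hf
  set g : Ω → ENNReal := fun ω => ENNReal.ofReal (Real.exp (-θ * U s t ω)) with hg
  have hfm : Measurable f := by
    have := hAmeas t
    have := hAmeas s
    fun_prop
  have hgm : Measurable g := by
    have := hUmeas s t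
    fun_prop
  have hfp : ∫⁻ ω, f ω ^ p ∂P
      ≤ ENNReal.ofReal (Real.exp (p * θ * ρA * ((t : ℝ) - (s : ℝ)) + p * θ * σA)) := by
    refine le_trans (le_of_eq (lintegral_congr fun ω => ?_)) (hAbound s t hst)
    rw [hf, hpow]
    ring_nf
  have hgq : ∫⁻ ω, g ω ^ q ∂P
      ≤ ENNReal.ofReal (Real.exp (q * θ * ρU * ((t : ℝ) - (s : ℝ)) + q * θ * σU)) := by
    refine le_trans (le_of_eq (lintegral_congr fun ω => ?_)) (hUbound s t hst)
    rw [hg, hpow]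
    ring_nf
  calc ∫⁻ ω, ENNReal.ofReal (Real.exp (-θ * max (U s t ω - (A t ω - A s ω)) 0)) ∂P
      ≤ ∫⁻ ω, (f * g) ω ∂P := by
        refine lintegral_mono fun ω => ?_
        rw [Pi.mul_apply, hf, hg, ← ENNReal.ofReal_mul (Real.exp_pos _).le, ← Real.exp_add]
        refine ENNReal.ofReal_le_ofReal (Real.exp_le_exp.mpr ?_)
        have := mul_le_mul_of_nonneg_left (le_max_left (U s t ω - (A t ω - A s ω)) 0) hθ.le
        linarith
    _ ≤ (∫⁻ ω, f ω ^ p ∂P) ^ (1 / p) * (∫⁻ ω, g ω ^ q ∂P) ^ (1 / q) :=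
        ENNReal.lintegral_mul_le_Lp_mul_Lq P hconj hfm.aemeasurable hgm.aemeasurable
    _ ≤ ENNReal.ofReal (Real.exp (p * θ * ρA * ((t : ℝ) - (s : ℝ)) + p * θ * σA)) ^ (1 / p)
        * ENNReal.ofReal (Real.exp (q * θ * ρU * ((t : ℝ) - (s : ℝ)) + q * θ * σU)) ^ (1 / q) := by
        gcongr
    _ = ENNReal.ofReal (Real.exp (θ * (ρA + ρU) * ((t : ℝ) - (s : ℝ)) + θ * (σA + σU))) := by
        rw [hpow, hpow, ← ENNReal.ofReal_mul (Real.exp_pos _).le, ← Real.exp_add]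
        congr 2
        field_simp
        ring
end

section
/- (Output bound, dependent case.) Let θ > 0 and let p, q > 1 with 1/p + 1/q = 1. Let A be a flow and U a service process on a common probability space (not assumed independent), with A MGF-bounded for pθ with bounding functions (ρ_A, σ_A) and U MGF-bounded for qθ with bounding functions (ρ_U, σ_U). Let B be the output of a dynamic U-server with input A. If ρ_A(pθ) + ρ_U(qθ) < 0, then B is MGF-bounded for θ with bounding functions ρ_B(θ) = ρ_A(pθ) and σ_B(θ) = σ_A(pθ) + σ_U(qθ) − (1/θ)·log(1 − e^{θ(ρ_A(pθ)+ρ_U(qθ))}); that is, E[e^{θB(s,t)}] ≤ e^{θρ_A(pθ)(t−s) + θ(σ_A(pθ)+σ_U(qθ))} / (1 − e^{θ(ρ_A(pθ)+ρ_U(qθ))}) for all s ≤ t. -/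
open MeasureTheory ProbabilityTheory

/-!
The server inequality at time `s`, together with `B t ≤ A t`, gives for each sample point some
`r ≤ s` with `B t - B s ≤ (A t - A r) - U r s`. Bounding the exponential of the maximum over `r`
by the sum over `r`, and applying Hölder's inequality to each
`exp (θ (A t - A r)) * exp (-θ U r s)` (`lintegral_exp_mul_exp_le`), leaves
`exp (θ ρA (t - s) + θ (σA + σU)) * ∑ r ≤ s, x ^ (s - r)` with `x = exp (θ (ρA + ρU)) < 1`,
and the geometric sum is at most `1 / (1 - x)` (`geom_sum_reflect_le`).
-/

/-- Hölder's inequality for exponential moments: bounds `exp (p a)` and `exp (q b)` on the moments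
of order `p` and `q` multiply to `exp (a + b)`. -/
lemma lintegral_exp_mul_exp_le {Ω : Type*} [MeasurableSpace Ω] (P : Measure Ω)
    {p q : ℝ} (hpq : p.HolderConjugate q) {X Y : Ω → ℝ} (hX : Measurable X) (hY : Measurable Y)
    {a b : ℝ}
    (hXa : ∫⁻ ω, ENNReal.ofReal (Real.exp (p * X ω)) ∂P ≤ ENNReal.ofReal (Real.exp (p * a)))
    (hYb : ∫⁻ ω, ENNReal.ofReal (Real.exp (q * Y ω)) ∂P ≤ ENNReal.ofReal (Real.exp (q * b))) :
    ∫⁻ ω, ENNReal.ofReal (Real.exp (X ω + Y ω)) ∂P ≤ ENNReal.ofReal (Real.exp (a + b)) := by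
  have hpow : ∀ r x : ℝ, 0 < r →
      ENNReal.ofReal (Real.exp x) ^ r = ENNReal.ofReal (Real.exp (r * x)) := by
    intro r x hr
    rw [ENNReal.ofReal_rpow_of_pos (Real.exp_pos x), ← Real.exp_mul, mul_comm]
  have hroot : ∀ {r : ℝ} (x : ℝ), 0 < r →
      ENNReal.ofReal (Real.exp (r * x)) ^ (1 / r) = ENNReal.ofReal (Real.exp x) := by
    intro r x hr
    rw [hpow _ _ (by positivity)]
    congr 2
    field_simp
  have hp0 := hpq.pos
  have hq0 := hpq.symm.pos
  have hol := ENNReal.lintegral_mul_le_Lp_mul_Lq P hpq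
    (f := fun ω => ENNReal.ofReal (Real.exp (X ω)))
    (g := fun ω => ENNReal.ofReal (Real.exp (Y ω)))
    (by fun_prop) (by fun_prop)
  simp only [Pi.mul_apply, hpow _ _ hp0, hpow _ _ hq0] at hol
  calc ∫⁻ ω, ENNReal.ofReal (Real.exp (X ω + Y ω)) ∂P
      = ∫⁻ ω, ENNReal.ofReal (Real.exp (X ω)) * ENNReal.ofReal (Real.exp (Y ω)) ∂P := by
        simp_rw [Real.exp_add, ENNReal.ofReal_mul (Real.exp_pos _).le]
    _ ≤ _ := hol
    _ ≤ ENNReal.ofReal (Real.exp (p * a)) ^ (1 / p)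
          * ENNReal.ofReal (Real.exp (q * b)) ^ (1 / q) := by gcongr
    _ = ENNReal.ofReal (Real.exp (a + b)) := by
        rw [hroot a hp0, hroot b hq0, Real.exp_add, ENNReal.ofReal_mul (Real.exp_pos _).le]

lemma geom_sum_reflect_le {x : ℝ} (hx0 : 0 ≤ x) (hx1 : x < 1) (s : ℕ) :
    ∑ r ∈ Finset.range (s + 1), x ^ (s - r) ≤ 1 / (1 - x) := by
  have hrefl := Finset.sum_range_reflect (fun j => x ^ j) (s + 1)
  simp only [Nat.add_sub_cancel] at hrefl
  rw [hrefl, le_div_iff₀ (by linarith), mul_comm, mul_neg_geom_sum]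
  linarith [pow_nonneg hx0 (s + 1)]

/-- Output bound, dependent case: with Hölder parameters `p, q`,
if `A` is MGF-bounded for `pθ` with values `(ρA, σA) = (ρ_A(pθ), σ_A(pθ))` and
`U` is MGF-bounded for `qθ` with values `(ρU, σU) = (ρ_U(qθ), σ_U(qθ))`, then the output `B`
of a dynamic `U`-server with input `A` is MGF-bounded for `θ` with `ρ_B = ρA` and
`σ_B = σA + σU − (1/θ)·log(1 − e^{θ(ρA+ρU)})`. -/
theorem output_bound_dependent
    {Ω : Type*} [MeasurableSpace Ω] (P : Measure Ω) [IsProbabilityMeasure P]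
    (θ : ℝ) (hθ : 0 < θ)
    (p q : ℝ) (hp : 1 < p) (hq : 1 < q) (hpq : 1 / p + 1 / q = 1)
    (A B : ℕ → Ω → ℝ) (U : ℕ → ℕ → Ω → ℝ)
    (ρA σA ρU σU : ℝ)
    -- A is a flow
    (hAmeas : ∀ t, Measurable (A t))
    (hAmono : ∀ ω, Monotone fun t => A t ω)
    (hAzero : ∀ ω, A 0 ω = 0)
    -- U is a service process
    (hUmeas : ∀ s t, Measurable (U s t))
    (hUnonneg : ∀ s t, s ≤ t → ∀ ω, 0 ≤ U s t ω)
    -- A is MGF-bounded for pθ, U is MGF-bounded for qθ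
    (hAbound : ∀ s t, s ≤ t →
      ∫⁻ ω, ENNReal.ofReal (Real.exp (p * θ * (A t ω - A s ω))) ∂P
        ≤ ENNReal.ofReal (Real.exp (p * θ * ρA * ((t : ℝ) - (s : ℝ)) + p * θ * σA)))
    (hUbound : ∀ s t, s ≤ t →
      ∫⁻ ω, ENNReal.ofReal (Real.exp (-(q * θ) * U s t ω)) ∂P
        ≤ ENNReal.ofReal (Real.exp (q * θ * ρU * ((t : ℝ) - (s : ℝ)) + q * θ * σU)))
    -- B is the output of a dynamic U-server with input A (and is a flow)
    (hBmeas : ∀ t, Measurable (B t))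
    (hBmono : ∀ ω, Monotone fun t => B t ω)
    (hBzero : ∀ ω, B 0 ω = 0)
    (hServer : ∀ t ω, sInf ((fun s => A s ω + U s t ω) '' Set.Icc 0 t) ≤ B t ω)
    (hBleA : ∀ t ω, B t ω ≤ A t ω)
    -- stability condition
    (hstab : ρA + ρU < 0) :
    ∀ s t, s ≤ t →
      ∫⁻ ω, ENNReal.ofReal (Real.exp (θ * (B t ω - B s ω))) ∂P
        ≤ ENNReal.ofReal (Real.exp (θ * ρA * ((t : ℝ) - (s : ℝ)) + θ * (σA + σU))
            / (1 - Real.exp (θ * (ρA + ρU)))) := by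
  intro s t hst
  have hH : p.HolderConjugate q :=
    Real.holderConjugate_iff.mpr ⟨hp, by simpa [one_div] using hpq⟩
  have hpoint : ∀ ω, ENNReal.ofReal (Real.exp (θ * (B t ω - B s ω))) ≤
      ∑ r ∈ Finset.range (s + 1),
        ENNReal.ofReal (Real.exp (θ * (A t ω - A r ω) + -(θ * U r s ω))) := by
    intro ω
    -- The infimum is over a finite nonempty set, hence attained.
    have hne : ((fun r => A r ω + U r s ω) '' Set.Icc 0 s).Nonempty :=
      (Set.nonempty_Icc.mpr (Nat.zero_le s)).image _
    obtain ⟨r, hr, hrval⟩ := hne.csInf_mem ((Set.finite_Icc 0 s).image _)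
    have hsrv := hServer s ω
    rw [← hrval] at hsrv
    have hBA := hBleA t ω
    have hr' : r ∈ Finset.range (s + 1) := Finset.mem_range.mpr (Nat.lt_succ_of_le hr.2)
    refine le_trans ?_ (Finset.single_le_sum
      (f := fun r => ENNReal.ofReal (Real.exp (θ * (A t ω - A r ω) + -(θ * U r s ω))))
      (fun _ _ => zero_le) hr')
    apply ENNReal.ofReal_le_ofReal
    apply Real.exp_le_exp.mpr
    have hle : B t ω - B s ω ≤ (A t ω - A r ω) - U r s ω := by
      simp only at hsrv
      linarith
    nlinarith [mul_le_mul_of_nonneg_left hle hθ.le]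
  have hterm : ∀ r ∈ Finset.range (s + 1),
      ∫⁻ ω, ENNReal.ofReal (Real.exp (θ * (A t ω - A r ω) + -(θ * U r s ω))) ∂P ≤
        ENNReal.ofReal (Real.exp (θ * ρA * ((t : ℝ) - s) + θ * (σA + σU))
          * Real.exp (θ * (ρA + ρU)) ^ (s - r)) := by
    intro r hr
    have hrs : r ≤ s := Nat.lt_succ_iff.mp (Finset.mem_range.mp hr)
    have hmX : Measurable fun ω => θ * (A t ω - A r ω) :=
      ((hAmeas t).sub (hAmeas r)).const_mul θ
    have hmY : Measurable fun ω => -(θ * U r s ω) := ((hUmeas r s).const_mul θ).neg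
    refine (lintegral_exp_mul_exp_le P hH hmX hmY
      (a := θ * ρA * ((t : ℝ) - r) + θ * σA) (b := θ * ρU * ((s : ℝ) - r) + θ * σU)
      ?_ ?_).trans (le_of_eq ?_)
    · convert hAbound r t (hrs.trans hst) using 3
      · ring_nf
      · ring_nf
    · convert hUbound r s hrs using 3
      · ring_nf
      · ring_nf
    · rw [← Real.exp_nat_mul, ← Real.exp_add, Nat.cast_sub hrs]
      ring_nf
  have hx1 : Real.exp (θ * (ρA + ρU)) < 1 :=
    Real.exp_lt_one_iff.mpr (mul_neg_of_pos_of_neg hθ hstab)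
  calc ∫⁻ ω, ENNReal.ofReal (Real.exp (θ * (B t ω - B s ω))) ∂P
      ≤ ∫⁻ ω, ∑ r ∈ Finset.range (s + 1),
          ENNReal.ofReal (Real.exp (θ * (A t ω - A r ω) + -(θ * U r s ω))) ∂P :=
        lintegral_mono hpoint
    _ = ∑ r ∈ Finset.range (s + 1),
          ∫⁻ ω, ENNReal.ofReal (Real.exp (θ * (A t ω - A r ω) + -(θ * U r s ω))) ∂P := by
        refine lintegral_finsetSum _ fun r _ => ?_
        exact ((((hAmeas t).sub (hAmeas r)).const_mul θ).add
          ((hUmeas r s).const_mul θ).neg).exp.ennreal_ofReal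
    _ ≤ ∑ r ∈ Finset.range (s + 1),
          ENNReal.ofReal (Real.exp (θ * ρA * ((t : ℝ) - s) + θ * (σA + σU))
            * Real.exp (θ * (ρA + ρU)) ^ (s - r)) := Finset.sum_le_sum hterm
    _ = ENNReal.ofReal (Real.exp (θ * ρA * ((t : ℝ) - s) + θ * (σA + σU))
          * ∑ r ∈ Finset.range (s + 1), Real.exp (θ * (ρA + ρU)) ^ (s - r)) := by
        rw [Finset.mul_sum, ENNReal.ofReal_sum_of_nonneg fun r _ => by positivity]
    _ ≤ _ := by
        apply ENNReal.ofReal_le_ofReal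
        rw [div_eq_mul_one_div]
        exact mul_le_mul_of_nonneg_left
          (geom_sum_reflect_le (Real.exp_pos _).le hx1 s) (Real.exp_pos _).le
end

section
/- (End-to-end delay bound for two servers.) Let θ > 0. Let A be a flow and U, V service processes on a common probability space, with A, U, V mutually stochastically independent, A MGF-bounded for θ with bounding functions (ρ_A, σ_A), U MGF-bounded for θ with (ρ_U, σ_U), and V MGF-bounded for θ with (ρ_V, σ_V). Let B be the output of a dynamic U-server with input A, and let C be the output of a dynamic V-server with input B; define the end-to-end virtual delay d(t) := min{ s ≥ 0 : A(t) ≤ C(t + s) }. Under the stability condition ρ_A(θ) < min(−ρ_U(θ), −ρ_V(θ)), for all t ≥ 0 and integer T ≥ 0: P(d(t) > T) ≤ e^{−θρ_A(θ)T} · e^{θ(σ_A(θ)+σ_U(θ)+σ_V(θ))} / ((1 − e^{θ(ρ_U(θ)+ρ_A(θ))})(1 − e^{θ(ρ_V(θ)+ρ_A(θ))})). -/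
/-!
If the delay at `t` exceeds `T`, then `C (t + T) < A t`. The minima in the two server inequalities
are attained, so unfolding them yields `r ≤ s ≤ t + T` with
`A r + U r s + V s (t + T) < A t`; nonnegativity of `U`, `V` and monotonicity of `A` force `r ≤ t`.
Markov's inequality and independence bound the probability of this event for a fixed pair `(r, s)`
by the product of the three moment bounds (`measure_path_le`).

In the coordinates `u = s - r`, `v = t + T - s` one has `t - r = u + v - T`, so this product is the
constant `exp (-θ ρA T) exp (θ (σA + σU + σV))` times
`exp (θ (ρU + ρA)) ^ u * exp (θ (ρV + ρA)) ^ v`. The union bound over all `(u, v) : ℕ × ℕ` then gives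
a product of two geometric series, convergent by the stability condition.
-/

open MeasureTheory ProbabilityTheory
open scoped ENNReal

/-- The expectation of a product of three factors, measurable with respect to independent
σ-algebras, is the product of the expectations. -/
lemma lintegral_mul_mul_of_iIndep {Ω : Type*} {m₁ m₂ m₃ : MeasurableSpace Ω}
    [mΩ : MeasurableSpace Ω] {P : Measure Ω} (h₁ : m₁ ≤ mΩ) (h₂ : m₂ ≤ mΩ) (h₃ : m₃ ≤ mΩ)
    (hind : iIndep ![m₁, m₂, m₃] P) {f g h : Ω → ℝ≥0∞}
    (hf : Measurable[m₁] f) (hg : Measurable[m₂] g) (hh : Measurable[m₃] h) :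
    ∫⁻ ω, f ω * g ω * h ω ∂P = (∫⁻ ω, f ω ∂P) * (∫⁻ ω, g ω ∂P) * ∫⁻ ω, h ω ∂P := by
  have hX : iIndepFun ![f, g, h] P := by
    rw [iIndepFun_iff_iIndep]
    refine iIndep_of_iIndep_of_le hind fun i => ?_
    fin_cases i
    · exact hf.comap_le
    · exact hg.comap_le
    · exact hh.comap_le
  have hmeas : ∀ i, Measurable (![f, g, h] i) := by
    intro i
    fin_cases i
    · exact hf.mono h₁ le_rfl
    · exact hg.mono h₂ le_rfl
    · exact hh.mono h₃ le_rfl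
  simpa [Fin.prod_univ_three] using
    lintegral_prod_eq_prod_lintegral_of_indepFun Finset.univ ![f, g, h] hX hmeas

/-- A lower bound by a minimum over `{0, …, n}` is a lower bound by one of the values. -/
lemma exists_le_of_sInf_image_Icc_le {f : ℕ → ℝ} {n : ℕ} {c : ℝ}
    (h : sInf (f '' Set.Icc 0 n) ≤ c) : ∃ s ≤ n, f s ≤ c := by
  have hne : (f '' Set.Icc 0 n).Nonempty := ⟨f 0, 0, by simp, rfl⟩
  obtain ⟨s, hs, hfs⟩ := hne.csInf_mem ((Set.finite_Icc 0 n).image f)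
  exact ⟨s, hs.2, hfs ▸ h⟩

/-- Chernoff bound for a single path: for independent `X`, `Y`, `Z`, the probability of `Y + Z < X`
is at most the product of bounds on `E[exp (θ X)]`, `E[exp (-θ Y)]` and `E[exp (-θ Z)]`. -/
lemma measure_path_le {Ω : Type*} {m₁ m₂ m₃ : MeasurableSpace Ω}
    [mΩ : MeasurableSpace Ω] {P : Measure Ω} (h₁ : m₁ ≤ mΩ) (h₂ : m₂ ≤ mΩ) (h₃ : m₃ ≤ mΩ)
    (hind : iIndep ![m₁, m₂, m₃] P) {θ a b c : ℝ} (hθ : 0 < θ) {X Y Z : Ω → ℝ}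
    (hX : Measurable[m₁] X) (hY : Measurable[m₂] Y) (hZ : Measurable[m₃] Z)
    (ha : ∫⁻ ω, ENNReal.ofReal (Real.exp (θ * X ω)) ∂P ≤ ENNReal.ofReal (Real.exp a))
    (hb : ∫⁻ ω, ENNReal.ofReal (Real.exp (-θ * Y ω)) ∂P ≤ ENNReal.ofReal (Real.exp b))
    (hc : ∫⁻ ω, ENNReal.ofReal (Real.exp (-θ * Z ω)) ∂P ≤ ENNReal.ofReal (Real.exp c)) :
    P {ω | Y ω + Z ω < X ω} ≤ ENNReal.ofReal (Real.exp (a + b + c)) := by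
  have hf : Measurable[m₁] fun ω => ENNReal.ofReal (Real.exp (θ * X ω)) :=
    (hX.const_mul θ).exp.ennreal_ofReal
  have hg : Measurable[m₂] fun ω => ENNReal.ofReal (Real.exp (-θ * Y ω)) :=
    (hY.const_mul (-θ)).exp.ennreal_ofReal
  have hh : Measurable[m₃] fun ω => ENNReal.ofReal (Real.exp (-θ * Z ω)) :=
    (hZ.const_mul (-θ)).exp.ennreal_ofReal
  have hprod : ∀ ω, ENNReal.ofReal (Real.exp (θ * X ω)) * ENNReal.ofReal (Real.exp (-θ * Y ω))
      * ENNReal.ofReal (Real.exp (-θ * Z ω))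
      = ENNReal.ofReal (Real.exp (θ * (X ω - (Y ω + Z ω)))) := by
    intro ω
    rw [← ENNReal.ofReal_mul (by positivity), ← ENNReal.ofReal_mul (by positivity),
      ← Real.exp_add, ← Real.exp_add]
    ring_nf
  have hmeas : Measurable fun ω => ENNReal.ofReal (Real.exp (θ * X ω))
      * ENNReal.ofReal (Real.exp (-θ * Y ω)) * ENNReal.ofReal (Real.exp (-θ * Z ω)) :=
    ((hf.mono h₁ le_rfl).mul (hg.mono h₂ le_rfl)).mul (hh.mono h₃ le_rfl)
  calc P {ω | Y ω + Z ω < X ω}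
      ≤ P {ω | 1 ≤ ENNReal.ofReal (Real.exp (θ * X ω)) * ENNReal.ofReal (Real.exp (-θ * Y ω))
          * ENNReal.ofReal (Real.exp (-θ * Z ω))} := by
        refine measure_mono fun ω hω => ?_
        simp only [Set.mem_ofPred_eq] at hω ⊢
        rw [hprod, ENNReal.one_le_ofReal]
        exact Real.one_le_exp (mul_nonneg hθ.le (by linarith))
    _ ≤ ∫⁻ ω, ENNReal.ofReal (Real.exp (θ * X ω)) * ENNReal.ofReal (Real.exp (-θ * Y ω))
          * ENNReal.ofReal (Real.exp (-θ * Z ω)) ∂P := by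
        simpa using mul_meas_ge_le_lintegral hmeas 1
    _ ≤ ENNReal.ofReal (Real.exp a) * ENNReal.ofReal (Real.exp b)
          * ENNReal.ofReal (Real.exp c) := by
        rw [lintegral_mul_mul_of_iIndep h₁ h₂ h₃ hind hf hg hh]
        gcongr
    _ = ENNReal.ofReal (Real.exp (a + b + c)) := by
        rw [← ENNReal.ofReal_mul (by positivity), ← ENNReal.ofReal_mul (by positivity),
          ← Real.exp_add, ← Real.exp_add]

/-- The double geometric series over `ℕ × ℕ`, in `ℝ≥0∞` with real parameters. -/
lemma tsum_geometric_prod {K x y : ℝ} (hK : 0 ≤ K) (hx : 0 ≤ x) (hy : 0 ≤ y) (hx1 : x < 1)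
    (hy1 : y < 1) :
    ∑' p : ℕ × ℕ, ENNReal.ofReal (K * x ^ p.1 * y ^ p.2)
      = ENNReal.ofReal (K / ((1 - x) * (1 - y))) := by
  have hterm : ∀ u v : ℕ, ENNReal.ofReal (K * x ^ u * y ^ v)
      = ENNReal.ofReal K * ENNReal.ofReal x ^ u * ENNReal.ofReal y ^ v := by
    intro u v
    rw [ENNReal.ofReal_mul (by positivity), ENNReal.ofReal_mul hK, ENNReal.ofReal_pow hx,
      ENNReal.ofReal_pow hy]
  have hinv : ∀ z : ℝ, 0 ≤ z → z < 1 → (1 - ENNReal.ofReal z)⁻¹ = ENNReal.ofReal (1 - z)⁻¹ := by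
    intro z hz hz1
    rw [ENNReal.ofReal_inv_of_pos (by linarith), ENNReal.ofReal_sub _ hz, ENNReal.ofReal_one]
  rw [ENNReal.tsum_prod (f := fun u v => ENNReal.ofReal (K * x ^ u * y ^ v))]
  simp_rw [hterm, ENNReal.tsum_mul_left, ENNReal.tsum_mul_right, ENNReal.tsum_mul_left,
    ENNReal.tsum_geometric]
  have := sub_pos.2 hx1
  rw [hinv x hx hx1, hinv y hy hy1, ← ENNReal.ofReal_mul hK, ← ENNReal.ofReal_mul (by positivity)]
  congr 1
  rw [div_eq_mul_inv, mul_inv, mul_assoc]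

/-- End-to-end delay bound for a tandem of two dynamic servers.
The end-to-end virtual delay `d(t) = min { s ≥ 0 | A(t) ≤ C(t+s) }` exceeds `T` exactly on the
event `{ω | every s with A(t) ≤ C(t+s) satisfies s > T}` (with `min ∅ = ∞`). -/
theorem end_to_end_delay_two_servers
    {Ω : Type*} [MeasurableSpace Ω] (P : Measure Ω) [IsProbabilityMeasure P]
    (θ : ℝ) (hθ : 0 < θ)
    (A B C : ℕ → Ω → ℝ) (U V : ℕ → ℕ → Ω → ℝ)
    (ρA σA ρU σU ρV σV : ℝ)
    -- A is a flow
    (hAmeas : ∀ t, Measurable (A t))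
    (hAmono : ∀ ω, Monotone fun t => A t ω)
    (hAzero : ∀ ω, A 0 ω = 0)
    -- U and V are service processes
    (hUmeas : ∀ s t, Measurable (U s t))
    (hUnonneg : ∀ s t, s ≤ t → ∀ ω, 0 ≤ U s t ω)
    (hVmeas : ∀ s t, Measurable (V s t))
    (hVnonneg : ∀ s t, s ≤ t → ∀ ω, 0 ≤ V s t ω)
    -- MGF bounds
    (hAbound : ∀ s t, s ≤ t →
      ∫⁻ ω, ENNReal.ofReal (Real.exp (θ * (A t ω - A s ω))) ∂P
        ≤ ENNReal.ofReal (Real.exp (θ * ρA * ((t : ℝ) - (s : ℝ)) + θ * σA)))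
    (hUbound : ∀ s t, s ≤ t →
      ∫⁻ ω, ENNReal.ofReal (Real.exp (-θ * U s t ω)) ∂P
        ≤ ENNReal.ofReal (Real.exp (θ * ρU * ((t : ℝ) - (s : ℝ)) + θ * σU)))
    (hVbound : ∀ s t, s ≤ t →
      ∫⁻ ω, ENNReal.ofReal (Real.exp (-θ * V s t ω)) ∂P
        ≤ ENNReal.ofReal (Real.exp (θ * ρV * ((t : ℝ) - (s : ℝ)) + θ * σV)))
    -- A, U, V are mutually stochastically independent
    (hIndep : iIndep
      ![⨆ t, MeasurableSpace.comap (A t) inferInstance,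
        ⨆ p : ℕ × ℕ, MeasurableSpace.comap (U p.1 p.2) inferInstance,
        ⨆ p : ℕ × ℕ, MeasurableSpace.comap (V p.1 p.2) inferInstance] P)
    -- B is the output of a dynamic U-server with input A (and is a flow)
    (hBmeas : ∀ t, Measurable (B t))
    (hBmono : ∀ ω, Monotone fun t => B t ω)
    (hBzero : ∀ ω, B 0 ω = 0)
    (hServerU : ∀ t ω, sInf ((fun s => A s ω + U s t ω) '' Set.Icc 0 t) ≤ B t ω)
    (hBleA : ∀ t ω, B t ω ≤ A t ω)
    -- C is the output of a dynamic V-server with input B (and is a flow)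
    (hCmeas : ∀ t, Measurable (C t))
    (hCmono : ∀ ω, Monotone fun t => C t ω)
    (hCzero : ∀ ω, C 0 ω = 0)
    (hServerV : ∀ t ω, sInf ((fun s => B s ω + V s t ω) '' Set.Icc 0 t) ≤ C t ω)
    (hCleB : ∀ t ω, C t ω ≤ B t ω)
    -- stability condition
    (hstab : ρA < min (-ρU) (-ρV))
    (t : ℕ) (T : ℕ) :
    P {ω | ∀ s : ℕ, A t ω ≤ C (t + s) ω → T < s}
      ≤ ENNReal.ofReal (Real.exp (-(θ * ρA) * (T : ℝ))
          * Real.exp (θ * (σA + σU + σV))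
          / ((1 - Real.exp (θ * (ρU + ρA))) * (1 - Real.exp (θ * (ρV + ρA))))) := by
  have hU : ρU + ρA < 0 := by linarith [hstab.trans_le (min_le_left _ _)]
  have hV : ρV + ρA < 0 := by linarith [hstab.trans_le (min_le_right _ _)]
  have hx1 : Real.exp (θ * (ρU + ρA)) < 1 := Real.exp_lt_one_iff.2 (mul_neg_of_pos_of_neg hθ hU)
  have hy1 : Real.exp (θ * (ρV + ρA)) < 1 := Real.exp_lt_one_iff.2 (mul_neg_of_pos_of_neg hθ hV)
  rw [← tsum_geometric_prod (by positivity) (Real.exp_nonneg _) (Real.exp_nonneg _) hx1 hy1]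
  -- The event for the path `r = t + T - (u + v)`, `s = t + T - v`; it is empty unless `0 ≤ r ≤ t`.
  let E : ℕ × ℕ → Set Ω := fun p => {ω | T ≤ p.1 + p.2 ∧ p.1 + p.2 ≤ t + T ∧
    U (t + T - (p.1 + p.2)) (t + T - p.2) ω + V (t + T - p.2) (t + T) ω
      < A t ω - A (t + T - (p.1 + p.2)) ω}
  have hcover : {ω | ∀ s : ℕ, A t ω ≤ C (t + s) ω → T < s} ⊆ ⋃ p, E p := by
    intro ω hω
    have hlt : C (t + T) ω < A t ω := by
      by_contra! hle
      exact lt_irrefl _ (hω T hle)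
    obtain ⟨s, hs, hBs⟩ := exists_le_of_sInf_image_Icc_le (hServerV (t + T) ω)
    obtain ⟨r, hr, hAr⟩ := exists_le_of_sInf_image_Icc_le (hServerU s ω)
    have hU0 := hUnonneg r s hr ω
    have hV0 := hVnonneg s (t + T) hs ω
    have hrt : r ≤ t := by
      by_contra! htr
      have : A t ω ≤ A r ω := hAmono ω htr.le
      linarith
    have e₁ : t + T - (s - r + (t + T - s)) = r := by omega
    have e₂ : t + T - (t + T - s) = s := by omega
    refine Set.mem_iUnion.2 ⟨(s - r, t + T - s), ?_⟩
    simp only [E, Set.mem_ofPred_eq, e₁, e₂]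
    exact ⟨by omega, by omega, by linarith⟩
  refine (measure_mono hcover).trans ((measure_iUnion_le E).trans (ENNReal.tsum_le_tsum ?_))
  rintro ⟨u, v⟩
  by_cases huv : T ≤ u + v ∧ u + v ≤ t + T
  swap
  · have hempty : E (u, v) = ∅ := by
      ext ω
      simp only [E, Set.mem_ofPred_eq, Set.mem_empty_iff_false, iff_false]
      exact fun h => huv ⟨h.1, h.2.1⟩
    simp [hempty]
  obtain ⟨huv₁, huv₂⟩ := huv
  obtain ⟨r, hr⟩ : ∃ r, r = t + T - (u + v) := ⟨_, rfl⟩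
  obtain ⟨s, hs⟩ : ∃ s, s = t + T - v := ⟨_, rfl⟩
  have hrt : r ≤ t := by omega
  have hrs : r ≤ s := by omega
  have hsN : s ≤ t + T := by omega
  have hsr : (s : ℝ) = r + u := by exact_mod_cast (by omega : s = r + u)
  have hNs : (t : ℝ) + T = s + v := by exact_mod_cast (by omega : t + T = s + v)
  have mA : ∀ i, Measurable[⨆ t, MeasurableSpace.comap (A t) inferInstance] (A i) := fun i =>
    Measurable.of_comap_le (le_iSup (fun t => MeasurableSpace.comap (A t) inferInstance) i)
  have mU : ∀ i j, Measurable[⨆ p : ℕ × ℕ, MeasurableSpace.comap (U p.1 p.2) inferInstance]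
      (U i j) := fun i j => Measurable.of_comap_le
    (le_iSup (fun p : ℕ × ℕ => MeasurableSpace.comap (U p.1 p.2) inferInstance) (i, j))
  have mV : ∀ i j, Measurable[⨆ p : ℕ × ℕ, MeasurableSpace.comap (V p.1 p.2) inferInstance]
      (V i j) := fun i j => Measurable.of_comap_le
    (le_iSup (fun p : ℕ × ℕ => MeasurableSpace.comap (V p.1 p.2) inferInstance) (i, j))
  have hpath := measure_path_le (iSup_le fun i => (hAmeas i).comap_le)
    (iSup_le fun p : ℕ × ℕ => (hUmeas p.1 p.2).comap_le)
    (iSup_le fun p : ℕ × ℕ => (hVmeas p.1 p.2).comap_le) hIndep hθ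
    ((mA t).sub (mA r)) (mU r s) (mV s (t + T))
    (hAbound r t hrt) (hUbound r s hrs) (hVbound s (t + T) hsN)
  have hsub : E (u, v) ⊆ {ω | U r s ω + V s (t + T) ω < A t ω - A r ω} := by
    intro ω hω
    simp only [E, Set.mem_ofPred_eq, ← hr, ← hs] at hω
    exact hω.2.2
  refine (measure_mono hsub).trans (hpath.trans (le_of_eq ?_))
  congr 1
  rw [← Real.exp_nat_mul, ← Real.exp_nat_mul, ← Real.exp_add, ← Real.exp_add, ← Real.exp_add]
  congr 1
  have ht : (t : ℝ) = r + u + v - T := by linarith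
  push_cast
  rw [hsr, ht]
  ring
end

section
/- (End-to-end delay bound for N servers.) Let θ > 0 and N ≥ 1. Let A be a flow and U₁, …, U_N service processes on a common probability space, with A, U₁, …, U_N mutually stochastically independent, A MGF-bounded for θ with bounding functions (ρ_A, σ_A) and each Uᵢ MGF-bounded for θ with bounding functions (ρᵢ, σᵢ). Let B₀ := A and for i = 1, …, N let Bᵢ be the output of a dynamic Uᵢ-server with input B_{i−1}; define the end-to-end virtual delay d(t) := min{ s ≥ 0 : A(t) ≤ B_N(t + s) }. Under the stability condition ρ_A(θ) < min_{1≤i≤N} (−ρᵢ(θ)), for all t ≥ 0 and integer T ≥ 0: P(d(t) > T) ≤ e^{−θρ_A(θ)T} · e^{θσ_A(θ) + Σ_{i=1}^{N} θσᵢ(θ)} / ∏_{i=1}^{N} (1 − e^{θ(ρᵢ(θ)+ρ_A(θ))}). -/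
open MeasureTheory ProbabilityTheory

/-!
If the delay at `t` exceeds `T`, then `B_N(t+T) < A(t)`. Unfolding the server inequalities from the
last server back to the first (each minimum over a finite set is attained) produces times
`s 0 ≤ s 1 ≤ ⋯ ≤ s N = t + T` with `A(s 0) + ∑ i, U i (s i, s (i+1)) ≤ B_N(t+T) < A(t)`, and
monotonicity of `A` with `U ≥ 0` forces `s 0 ≤ t` (`exists_chain`).

For a fixed chain with increments `u i = s (i+1) - s i`, Markov's inequality for the exponential,
independence and the MGF bounds give probability at most
`exp (-θ ρA T) * exp (θ σA + ∑ θ σ i) * ∏ i, exp (θ (ρ i + ρA)) ^ u i`, where `∑ i, u i = t + T - s 0`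
has been used to distribute `ρA (t - s 0)` over the increments (`chain_bound`).

A chain is determined by its increments, so the union bound is a sum over `u : Fin N → ℕ`, which
factors into a product of geometric sums, each at most `1 / (1 - exp (θ (ρ i + ρA)))`.
-/

/-- The tail sum `∑_{j ≥ k} u j`: the distance from the `k`-th to the last time of the chain with
increments `u`. -/
def tailSum {N : ℕ} (u : Fin N → ℕ) (k : ℕ) : ℕ := ∑ j : Fin N, if k ≤ j then u j else 0

lemma tailSum_top {N : ℕ} (u : Fin N → ℕ) : tailSum u N = 0 := by
  unfold tailSum
  refine Finset.sum_eq_zero fun j _ => ?_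
  rw [if_neg (by have := j.2; omega)]

lemma tailSum_zero {N : ℕ} (u : Fin N → ℕ) : tailSum u 0 = ∑ j, u j := by
  simp [tailSum]

lemma tailSum_step {N : ℕ} (u : Fin N → ℕ) (k : Fin N) :
    tailSum u k = u k + tailSum u (k + 1) := by
  have h : u k = ∑ j : Fin N, if j = k then u j else 0 := by simp
  unfold tailSum
  rw [h, ← Finset.sum_add_distrib]
  refine Finset.sum_congr rfl fun j _ => ?_
  rcases lt_trichotomy (k : ℕ) j with hlt | heq | hgt
  · have : j ≠ k := by rintro rfl; omega
    rw [if_pos hlt.le, if_neg this, if_pos (by omega)]; simp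
  · have : j = k := Fin.ext heq.symm
    subst this
    simp
  · have : j ≠ k := by rintro rfl; omega
    rw [if_neg (by omega), if_neg this, if_neg (by omega)]

lemma tailSum_le {N : ℕ} (u : Fin N → ℕ) (k : ℕ) : tailSum u k ≤ ∑ j, u j := by
  unfold tailSum
  refine Finset.sum_le_sum fun j _ => ?_
  split_ifs <;> simp

/-- Pathwise unfolding of the first `n` servers: some chain of times ending at `τ` attains all the
minima. The function `s` is only meaningful on `{0, …, n}`. -/
lemma exists_chain_aux {N : ℕ} (U : Fin N → ℕ → ℕ → ℝ) (B : ℕ → ℕ → ℝ)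
    (hServer : ∀ i : Fin N, ∀ t,
      sInf ((fun s => B i s + U i s t) '' Set.Icc 0 t) ≤ B (i + 1) t) :
    ∀ n, n ≤ N → ∀ τ, ∃ s : ℕ → ℕ, s n = τ ∧
      (∀ i : Fin N, (i : ℕ) < n → s i ≤ s (i + 1)) ∧
      (∀ i : Fin N, (i : ℕ) < n →
        B i (s i) + U i (s i) (s (i + 1)) ≤ B (i + 1) (s (i + 1))) := by
  intro n
  induction n with
  | zero => exact fun _ τ => ⟨fun _ => τ, rfl, by simp, by simp⟩
  | succ n ih =>
    intro hn τ
    have hmem := Set.Nonempty.csInf_mem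
      (s := (fun s => B n s + U ⟨n, hn⟩ s τ) '' Set.Icc 0 τ)
      (Set.Nonempty.image _ ⟨0, by simp⟩) ((Set.finite_Icc 0 τ).image _)
    obtain ⟨r, hr, hreq⟩ := hmem
    have hr' : B n r + U ⟨n, hn⟩ r τ ≤ B (n + 1) τ := by
      have := hServer ⟨n, hn⟩ τ
      simp only at this hreq
      rw [← hreq] at this
      exact this
    obtain ⟨s, hs, hmono, hle⟩ := ih (by omega) r
    refine ⟨fun k => if k ≤ n then s k else τ, by simp, fun i hi => ?_, fun i hi => ?_⟩
    · rcases Nat.lt_succ_iff_lt_or_eq.mp hi with h | h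
      · simpa [h.le, Nat.succ_le_of_lt h] using hmono i h
      · simpa [h, hs] using hr.2
    · rcases Nat.lt_succ_iff_lt_or_eq.mp hi with h | h
      · simpa [h.le, Nat.succ_le_of_lt h] using hle i h
      · have : i = ⟨n, hn⟩ := Fin.ext h
        subst this
        simpa [hs] using hr'

/-- A path with `B_N(τ) < A(t)` yields increments `u` whose chain
`s k = τ - tailSum u k` starts no later than `t` and satisfies the unfolded inequality. -/
lemma exists_chain {N : ℕ} (U : Fin N → ℕ → ℕ → ℝ) (B : ℕ → ℕ → ℝ)
    (hUnonneg : ∀ i s t, s ≤ t → 0 ≤ U i s t)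
    (hmono : Monotone (B 0))
    (hServer : ∀ i : Fin N, ∀ t,
      sInf ((fun s => B i s + U i s t) '' Set.Icc 0 t) ≤ B (i + 1) t)
    (t τ : ℕ) (hlt : B N τ < B 0 t) :
    ∃ u : Fin N → ℕ, ∑ i, u i ≤ τ ∧ τ - tailSum u 0 ≤ t ∧
      B 0 (τ - tailSum u 0) + ∑ i : Fin N, U i (τ - tailSum u i) (τ - tailSum u (i + 1))
        ≤ B 0 t := by
  obtain ⟨s, hsN, hsm, hsle⟩ := exists_chain_aux U B hServer N le_rfl τ
  let u : Fin N → ℕ := fun i => s (i + 1) - s i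
  have htail : ∀ k, k ≤ N → s k + tailSum u k = τ := by
    intro k hk
    induction hk using Nat.decreasingInduction with
    | self => rw [tailSum_top, hsN, add_zero]
    | of_succ k hk ih =>
      have h1 := tailSum_step u ⟨k, hk⟩
      have h2 := hsm ⟨k, hk⟩ hk
      simp only [u] at h1 h2 ih ⊢
      omega
  have hS : ∀ k, k ≤ N → τ - tailSum u k = s k := fun k hk => by
    have := htail k hk; omega
  have hsum : ∀ n, n ≤ N → B 0 (s 0) + ∑ i : Fin N, (if (i : ℕ) < n then
      U i (s i) (s (i + 1)) else 0) ≤ B n (s n) := by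
    intro n
    induction n with
    | zero => simp
    | succ n ih =>
      intro hn
      have h1 := ih (by omega)
      have h2 := hsle ⟨n, hn⟩ hn
      have h3 : ∑ i : Fin N, (if (i : ℕ) < n + 1 then U i (s i) (s (i + 1)) else 0)
          = ∑ i : Fin N, (if (i : ℕ) < n then U i (s i) (s (i + 1)) else 0)
            + U ⟨n, hn⟩ (s n) (s (n + 1)) := by
        have h4 : U ⟨n, hn⟩ (s n) (s (n + 1))
            = ∑ i : Fin N, if i = ⟨n, hn⟩ then U i (s i) (s (i + 1)) else 0 := by simp
        rw [h4, ← Finset.sum_add_distrib]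
        refine Finset.sum_congr rfl fun i _ => ?_
        by_cases hi : i = ⟨n, hn⟩
        · subst hi; simp
        · have : (i : ℕ) ≠ n := fun h => hi (Fin.ext h)
          have h5 : (i : ℕ) < n + 1 ↔ (i : ℕ) < n := by omega
          simp [hi, h5]
      rw [h3]
      simp only at h2
      linarith
  have htot := hsum N le_rfl
  simp only [Fin.is_lt, if_true, hsN] at htot
  have hnn : 0 ≤ ∑ i : Fin N, U i (s i) (s (i + 1)) :=
    Finset.sum_nonneg fun i _ => hUnonneg _ _ _ (hsm i i.2)
  refine ⟨u, ?_, ?_, ?_⟩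
  · have := htail 0 (Nat.zero_le _)
    rw [tailSum_zero] at this
    omega
  · rw [hS 0 (Nat.zero_le _)]
    by_contra hcon
    have := hmono (not_le.mp hcon).le
    linarith
  · rw [hS 0 (Nat.zero_le _)]
    have : ∀ i : Fin N, U i (τ - tailSum u i) (τ - tailSum u (i + 1))
        = U i (s i) (s (i + 1)) := fun i => by
      rw [hS i i.2.le, hS (i + 1) i.2]
    simp only [this]
    linarith

/-- Chernoff bound for a single chain of times `s` with increments `u` ending at `t + T`. -/
lemma chain_bound
    {Ω : Type*} [MeasurableSpace Ω] (P : Measure Ω) [IsProbabilityMeasure P]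
    (θ : ℝ) (hθ : 0 < θ) (N : ℕ)
    (A : ℕ → Ω → ℝ) (U : Fin N → ℕ → ℕ → Ω → ℝ)
    (ρA σA : ℝ) (ρ σ : Fin N → ℝ)
    (hAmeas : ∀ t, Measurable (A t))
    (hUmeas : ∀ i s t, Measurable (U i s t))
    (hAbound : ∀ s t, s ≤ t →
      ∫⁻ ω, ENNReal.ofReal (Real.exp (θ * (A t ω - A s ω))) ∂P
        ≤ ENNReal.ofReal (Real.exp (θ * ρA * ((t : ℝ) - (s : ℝ)) + θ * σA)))
    (hUbound : ∀ i, ∀ s t, s ≤ t →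
      ∫⁻ ω, ENNReal.ofReal (Real.exp (-θ * U i s t ω)) ∂P
        ≤ ENNReal.ofReal (Real.exp (θ * ρ i * ((t : ℝ) - (s : ℝ)) + θ * σ i)))
    (hIndep : iIndep (fun j : Option (Fin N) =>
      Option.elim j (⨆ t, MeasurableSpace.comap (A t) inferInstance)
        (fun i => ⨆ p : ℕ × ℕ, MeasurableSpace.comap (U i p.1 p.2) inferInstance)) P)
    (t T : ℕ) (s : ℕ → ℕ) (u : Fin N → ℕ)
    (hs : ∀ i : Fin N, s (i + 1) = s i + u i) (hs0 : s 0 ≤ t)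
    (hsum : s 0 + ∑ i, u i = t + T) :
    P {ω | A (s 0) ω + ∑ i : Fin N, U i (s i) (s (i + 1)) ω ≤ A t ω}
      ≤ ENNReal.ofReal (Real.exp (-(θ * ρA) * (T : ℝ))
          * Real.exp (θ * σA + ∑ i : Fin N, θ * σ i)
          * ∏ i : Fin N, Real.exp (θ * (ρ i + ρA)) ^ u i) := by
  let X : Option (Fin N) → Ω → ENNReal := fun j => Option.elim j
    (fun ω => ENNReal.ofReal (Real.exp (θ * (A t ω - A (s 0) ω))))
    (fun i ω => ENNReal.ofReal (Real.exp (-θ * U i (s i) (s (i + 1)) ω)))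
  have hXmeas : ∀ j, Measurable (X j) := by
    rintro (_ | i)
    · have h1 := hAmeas t
      have h2 := hAmeas (s 0)
      simp only [X, Option.elim]
      fun_prop
    · have h1 := hUmeas i (s i) (s (i + 1))
      simp only [X, Option.elim]
      fun_prop
  have hXindep : iIndepFun X P := by
    rw [iIndepFun_iff_iIndep]
    refine iIndep_of_iIndep_of_le hIndep ?_
    rintro (_ | i)
    · -- `X none` is measurable for the σ-algebra generated by `A`
      rw [← measurable_iff_comap_le]
      have h : ∀ r, Measurable[⨆ t, MeasurableSpace.comap (A t) inferInstance] (A r) := fun r =>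
        measurable_iff_comap_le.mpr
          (le_iSup (fun t => MeasurableSpace.comap (A t) inferInstance) r)
      have h1 := h t
      have h2 := h (s 0)
      simp only [X, Option.elim]
      exact ((Real.measurable_exp.comp ((h1.sub h2).const_mul θ))).ennreal_ofReal
    · rw [← measurable_iff_comap_le]
      have h1 : Measurable[⨆ p : ℕ × ℕ, MeasurableSpace.comap (U i p.1 p.2) inferInstance]
          (U i (s i) (s (i + 1))) :=
        measurable_iff_comap_le.mpr
          (le_iSup (fun p : ℕ × ℕ => MeasurableSpace.comap (U i p.1 p.2) inferInstance)
            (s i, s (i + 1)))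
      simp only [X, Option.elim]
      exact ((Real.measurable_exp.comp (h1.const_mul (-θ)))).ennreal_ofReal
  have hprod := lintegral_prod_eq_prod_lintegral_of_indepFun Finset.univ X hXindep hXmeas
  have hval : ∀ ω, ∏ j, X j ω = ENNReal.ofReal (Real.exp
      (θ * (A t ω - (A (s 0) ω + ∑ i : Fin N, U i (s i) (s (i + 1)) ω)))) := by
    intro ω
    rw [Fintype.prod_option]
    simp only [X, Option.elim]
    rw [← ENNReal.ofReal_prod_of_nonneg fun i _ => (Real.exp_pos _).le,
      ← ENNReal.ofReal_mul (Real.exp_pos _).le, ← Real.exp_sum, ← Real.exp_add,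
      ← Finset.mul_sum]
    congr 2
    ring
  calc P {ω | A (s 0) ω + ∑ i : Fin N, U i (s i) (s (i + 1)) ω ≤ A t ω}
      ≤ P {ω | 1 ≤ ∏ j, X j ω} := by
        refine measure_mono fun ω hω => ?_
        simp only [Set.mem_ofPred_eq] at hω ⊢
        rw [hval, ENNReal.one_le_ofReal]
        exact Real.one_le_exp (mul_nonneg hθ.le (sub_nonneg.mpr hω))
    _ ≤ ∫⁻ ω, ∏ j, X j ω ∂P := by
        have := mul_meas_ge_le_lintegral (μ := P)
          (Finset.measurable_fun_prod Finset.univ fun j _ => hXmeas j) 1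
        simpa using this
    _ = ∏ j, ∫⁻ ω, X j ω ∂P := hprod
    _ ≤ ENNReal.ofReal (Real.exp (θ * ρA * ((t : ℝ) - (s 0 : ℝ)) + θ * σA))
          * ∏ i : Fin N, ENNReal.ofReal
              (Real.exp (θ * ρ i * (((s (i + 1) : ℕ) : ℝ) - (s i : ℝ)) + θ * σ i)) := by
        rw [Fintype.prod_option]
        refine mul_le_mul' (hAbound _ _ hs0) (Finset.prod_le_prod' fun i _ => ?_)
        exact hUbound i _ _ (by rw [hs i]; omega)
    _ = _ := by
        rw [← ENNReal.ofReal_prod_of_nonneg fun i _ => (Real.exp_pos _).le,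
          ← ENNReal.ofReal_mul (Real.exp_pos _).le]
        simp only [← Real.exp_nat_mul]
        rw [← Real.exp_sum, ← Real.exp_sum, ← Real.exp_add, ← Real.exp_add, ← Real.exp_add]
        congr 2
        have hc : (s 0 : ℝ) + ∑ i, (u i : ℝ) = t + T := by exact_mod_cast hsum
        have h1 : ∀ i : Fin N, θ * ρ i * (((s (i + 1) : ℕ) : ℝ) - (s i : ℝ)) + θ * σ i
            = θ * σ i + ((u i : ℝ) * (θ * (ρ i + ρA)) - θ * ρA * (u i : ℝ)) := fun i => by
          rw [hs i]; push_cast; ring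
        simp only [h1]
        rw [Finset.sum_add_distrib, Finset.sum_sub_distrib, ← Finset.mul_sum (f := fun i => (u i : ℝ))]
        have h2 : ∑ i, (u i : ℝ) = t + T - s 0 := by linarith
        rw [h2]
        ring

/-- End-to-end delay bound for a tandem of `N` dynamic servers.
`B 0 = A` and `B (i+1)` is the output of a dynamic `U i`-server with input `B i`.
The end-to-end virtual delay `d(t) = min { s ≥ 0 | A(t) ≤ B_N(t+s) }` exceeds `T` exactly on
the event `{ω | every s with A(t) ≤ B_N(t+s) satisfies s > T}` (with `min ∅ = ∞`). -/
theorem end_to_end_delay_N_servers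
    {Ω : Type*} [MeasurableSpace Ω] (P : Measure Ω) [IsProbabilityMeasure P]
    (θ : ℝ) (hθ : 0 < θ)
    (N : ℕ) (hN : 1 ≤ N)
    (A : ℕ → Ω → ℝ) (U : Fin N → ℕ → ℕ → Ω → ℝ) (B : ℕ → ℕ → Ω → ℝ)
    (ρA σA : ℝ) (ρ σ : Fin N → ℝ)
    -- A is a flow
    (hAmeas : ∀ t, Measurable (A t))
    (hAmono : ∀ ω, Monotone fun t => A t ω)
    (hAzero : ∀ ω, A 0 ω = 0)
    -- each U i is a service process
    (hUmeas : ∀ i s t, Measurable (U i s t))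
    (hUnonneg : ∀ i s t, s ≤ t → ∀ ω, 0 ≤ U i s t ω)
    -- MGF bounds
    (hAbound : ∀ s t, s ≤ t →
      ∫⁻ ω, ENNReal.ofReal (Real.exp (θ * (A t ω - A s ω))) ∂P
        ≤ ENNReal.ofReal (Real.exp (θ * ρA * ((t : ℝ) - (s : ℝ)) + θ * σA)))
    (hUbound : ∀ i, ∀ s t, s ≤ t →
      ∫⁻ ω, ENNReal.ofReal (Real.exp (-θ * U i s t ω)) ∂P
        ≤ ENNReal.ofReal (Real.exp (θ * ρ i * ((t : ℝ) - (s : ℝ)) + θ * σ i)))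
    -- A, U₁, …, U_N are mutually stochastically independent
    (hIndep : iIndep (fun j : Option (Fin N) =>
      Option.elim j (⨆ t, MeasurableSpace.comap (A t) inferInstance)
        (fun i => ⨆ p : ℕ × ℕ, MeasurableSpace.comap (U i p.1 p.2) inferInstance)) P)
    -- B 0 = A, and B (i+1) is the output of a dynamic (U i)-server with input B i
    (hB0 : ∀ t ω, B 0 t ω = A t ω)
    (hBmeas : ∀ i t, Measurable (B i t))
    (hBmono : ∀ i ω, Monotone fun t => B i t ω)
    (hBzero : ∀ i ω, B i 0 ω = 0)
    (hServer : ∀ i : Fin N, ∀ t ω,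
      sInf ((fun s => B i s ω + U i s t ω) '' Set.Icc 0 t) ≤ B (i + 1) t ω)
    (hBle : ∀ i : Fin N, ∀ t ω, B (i + 1) t ω ≤ B i t ω)
    -- stability condition: ρ_A(θ) < min_{1 ≤ i ≤ N} (−ρ_i(θ))
    (hstab : ∀ i : Fin N, ρA < -ρ i)
    (t : ℕ) (T : ℕ) :
    P {ω | ∀ s : ℕ, A t ω ≤ B N (t + s) ω → T < s}
      ≤ ENNReal.ofReal (Real.exp (-(θ * ρA) * (T : ℝ))
          * Real.exp (θ * σA + ∑ i : Fin N, θ * σ i)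
          / ∏ i : Fin N, (1 - Real.exp (θ * (ρ i + ρA)))) := by
  set q : Fin N → ℝ := fun i => Real.exp (θ * (ρ i + ρA)) with hq
  have hq1 : ∀ i, q i < 1 := fun i => by
    refine Real.exp_lt_one_iff.mpr (mul_neg_of_pos_of_neg hθ ?_)
    linarith [hstab i]
  have hq0 : ∀ i, 0 < q i := fun i => Real.exp_pos _
  set C : ℝ := Real.exp (-(θ * ρA) * (T : ℝ)) * Real.exp (θ * σA + ∑ i : Fin N, θ * σ i) with hC
  have hC0 : 0 ≤ C := by positivity
  set τ := t + T with hτ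
  let S : (Fin N → ℕ) → ℕ → ℕ := fun u k => τ - tailSum u k
  let E : (Fin N → ℕ) → Set Ω := fun u =>
    {ω | A (S u 0) ω + ∑ i : Fin N, U i (S u i) (S u (i + 1)) ω ≤ A t ω}
  -- increments of a chain are at most `τ`, so finitely many `u` suffice
  let G : Finset (Fin N → ℕ) := Fintype.piFinset fun _ => Finset.range (τ + 1)
  let F : Finset (Fin N → ℕ) := {u ∈ G | ∑ i, u i ≤ τ ∧ S u 0 ≤ t}
  have hcover : {ω | ∀ s : ℕ, A t ω ≤ B N (t + s) ω → T < s} ⊆ ⋃ u ∈ F, E u := by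
    intro ω hω
    have hlt : B N τ ω < B 0 t ω := by
      rw [hB0]
      by_contra hcon
      exact lt_irrefl _ (hω T (not_lt.mp hcon))
    obtain ⟨u, hu1, hu2, hu3⟩ := exists_chain (fun i s t => U i s t ω) (fun i t => B i t ω)
      (fun i s t hst => hUnonneg i s t hst ω) (hBmono 0 ω) (fun i t => hServer i t ω) t τ hlt
    simp only [Set.mem_iUnion]
    refine ⟨u, ?_, ?_⟩
    · simp only [F, G, Finset.mem_filter, Fintype.mem_piFinset, Finset.mem_range]
      refine ⟨fun i => ?_, hu1, hu2⟩
      have := Finset.single_le_sum (f := u) (fun _ _ => Nat.zero_le _) (Finset.mem_univ i)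
      omega
    · simp only [hB0] at hu3
      exact hu3
  have hE : ∀ u ∈ F, P (E u) ≤ ENNReal.ofReal (C * ∏ i, q i ^ u i) := by
    intro u hu
    obtain ⟨-, hu1, hu2⟩ := Finset.mem_filter.mp hu
    refine chain_bound P θ hθ N A U ρA σA ρ σ hAmeas hUmeas hAbound hUbound hIndep t T
      (S u) u (fun i => ?_) hu2 ?_
    · have h1 := tailSum_step u i
      have h2 := tailSum_le u i
      simp only [S]
      omega
    · simp only [S, tailSum_zero]
      omega
  calc P {ω | ∀ s : ℕ, A t ω ≤ B N (t + s) ω → T < s}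
      ≤ P (⋃ u ∈ F, E u) := measure_mono hcover
    _ ≤ ∑ u ∈ F, P (E u) := measure_biUnion_finset_le _ _
    _ ≤ ∑ u ∈ F, ENNReal.ofReal (C * ∏ i, q i ^ u i) := Finset.sum_le_sum hE
    _ ≤ ∑ u ∈ G, ENNReal.ofReal (C * ∏ i, q i ^ u i) :=
        Finset.sum_le_sum_of_subset (Finset.filter_subset _ _)
    _ = ENNReal.ofReal (∑ u ∈ G, C * ∏ i, q i ^ u i) :=
        (ENNReal.ofReal_sum_of_nonneg fun u _ =>
          mul_nonneg hC0 (Finset.prod_nonneg fun i _ => (pow_pos (hq0 i) _).le)).symm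
    _ = ENNReal.ofReal (C * ∏ i, ∑ n ∈ Finset.range (τ + 1), q i ^ n) := by
        rw [← Finset.mul_sum, Finset.prod_univ_sum]
    _ ≤ ENNReal.ofReal (C / ∏ i : Fin N, (1 - q i)) := by
        refine ENNReal.ofReal_le_ofReal ?_
        rw [div_eq_mul_inv, ← Finset.prod_inv_distrib]
        refine mul_le_mul_of_nonneg_left (Finset.prod_le_prod (fun i _ => ?_) fun i _ => ?_) hC0
        · exact Finset.sum_nonneg fun n _ => (pow_pos (hq0 i) n).le
        · rw [← tsum_geometric_of_lt_one (hq0 i).le (hq1 i)]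
          exact (summable_geometric_of_lt_one (hq0 i).le (hq1 i)).sum_le_tsum _
            fun n _ => (pow_pos (hq0 i) n).le
end

section
/- (Aggregate of stationary token-bucket-shaped flows.) Let θ > 0 and let A₁, …, A_n be flows on a common probability space such that (i) each Aᵢ is stationary, i.e., for every shift τ and all s ≤ t the increment Aᵢ(s+τ, t+τ) is equal in distribution to Aᵢ(s,t), and (ii) each Aᵢ is token-bucket shaped: Aᵢ(s,t) ≤ ρᵢ(t−s) + σᵢ almost surely for all s ≤ t, with constants ρᵢ ≥ 0 and σᵢ ≥ 0. Then the aggregate A := Σᵢ Aᵢ satisfies, for all s ≤ t: E[e^{θ A(s,t)}] ≤ e^{θ(Σᵢ ρᵢ)(t−s)} · ( (1/2) e^{θ Σᵢ σᵢ} + (1/2) e^{−θ Σᵢ σᵢ} ); in particular A is MGF-bounded for θ with bounding functions ρ(θ) = Σᵢ ρᵢ and σ(θ) = (1/θ)·log( (1/2) e^{θ Σᵢ σᵢ} + (1/2) e^{−θ Σᵢ σᵢ} ). -/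
/-!
Fix `s ≤ t`, `d = t - s`, and put `zᵢ = Aᵢ(s,t) - ρᵢ d ≤ σᵢ`. The lower bound `zᵢ ≥ -σᵢ` may fail,
so `zᵢ` is replaced by the truncation `Dᵢ = max zᵢ (-σᵢ) ∈ [-σᵢ, σᵢ]`, which still satisfies
`E Dᵢ ≤ 0`. To see this, sum the truncated increments over `K` consecutive windows of length `d`:
the pathwise bound `exists_sum_max_le` shows that this sum is at most `σᵢ`, because after every
truncated window the sum can be restarted from zero. By stationarity `K * E Dᵢ ≤ σᵢ` for every `K`.

The mean condition involves only the marginal law of each flow, so no joint stationarity is needed: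
`D = ∑ Dᵢ` lies in `[-S, S]` with `S = ∑ σᵢ`, has nonpositive mean, and dominates `∑ zᵢ`. The chord
of `exp` over `[-θ S, θ S]` then gives `E exp (θ D) ≤ cosh (θ S)`.
-/

open MeasureTheory ProbabilityTheory

/-- If all increments of the real sequence `Z` are at most `c`, then the sum of its one-step
increments truncated below at `-c` is at most some single increment of `Z`
(and therefore at most `c`). -/
lemma exists_sum_max_le (Z : ℕ → ℝ) (c : ℝ) (hZ : ∀ j k, j ≤ k → Z k - Z j ≤ c) (K : ℕ) :
    ∃ j ≤ K, ∑ k ∈ Finset.range K, max (Z (k + 1) - Z k) (-c) ≤ Z K - Z j := by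
  induction K with
  | zero => exact ⟨0, le_rfl, by simp⟩
  | succ K ih =>
    obtain ⟨j, hj, h⟩ := ih
    rw [Finset.sum_range_succ]
    rcases le_total (-c) (Z (K + 1) - Z K) with h1 | h1
    · exact ⟨j, by omega, by rw [max_eq_left h1]; linarith⟩
    · -- A truncated step costs `c`, which absorbs the whole sum before it.
      refine ⟨K + 1, le_rfl, ?_⟩
      rw [max_eq_right h1]
      linarith [hZ j K hj]

/-- For one stationary flow `B` with token-bucket bound `(r, c)`, the centred increment truncated
below at `-c` has nonpositive mean. -/
lemma integral_max_nonpos {Ω : Type*} [MeasurableSpace Ω] (P : Measure Ω)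
    [IsProbabilityMeasure P] (B : ℕ → Ω → ℝ) (r c : ℝ) (hc : 0 ≤ c)
    (hmeas : ∀ t, Measurable (B t))
    (hstat : ∀ τ s t : ℕ, s ≤ t →
      IdentDistrib (fun ω => B (t + τ) ω - B (s + τ) ω) (fun ω => B t ω - B s ω) P P)
    (htb : ∀ s t : ℕ, s ≤ t → ∀ᵐ ω ∂P, B t ω - B s ω ≤ r * ((t : ℝ) - (s : ℝ)) + c)
    (s t : ℕ) (hst : s ≤ t) :
    Integrable (fun ω => max (B t ω - B s ω - r * ((t : ℝ) - (s : ℝ))) (-c)) P ∧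
      ∫ ω, max (B t ω - B s ω - r * ((t : ℝ) - (s : ℝ))) (-c) ∂P ≤ 0 := by
  obtain ⟨d, rfl⟩ := Nat.exists_eq_add_of_le hst
  have hg : Measurable (fun x : ℝ => max (x - r * (((s + d : ℕ) : ℝ) - (s : ℝ))) (-c)) := by
    fun_prop
  have hint : Integrable
      (fun ω => max (B (s + d) ω - B s ω - r * (((s + d : ℕ) : ℝ) - (s : ℝ))) (-c)) P := by
    refine Integrable.of_bound (C := c) (by fun_prop) ?_
    filter_upwards [htb s (s + d) hst] with ω hω
    rw [Real.norm_eq_abs, abs_le]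
    exact ⟨le_max_right _ _, max_le (by linarith) (by linarith)⟩
  refine ⟨hint, ?_⟩
  set I := ∫ ω, max (B (s + d) ω - B s ω - r * (((s + d : ℕ) : ℝ) - (s : ℝ))) (-c) ∂P with hI
  have hid : ∀ k : ℕ, IdentDistrib
      (fun ω => max (B (s + d + k * d) ω - B (s + k * d) ω
        - r * (((s + d : ℕ) : ℝ) - (s : ℝ))) (-c))
      (fun ω => max (B (s + d) ω - B s ω - r * (((s + d : ℕ) : ℝ) - (s : ℝ))) (-c)) P P :=
    fun k => (hstat (k * d) s (s + d) hst).comp hg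
  have hall : ∀ᵐ ω ∂P, ∀ j k : ℕ, s + j * d ≤ s + k * d →
      B (s + k * d) ω - B (s + j * d) ω
        ≤ r * (((s + k * d : ℕ) : ℝ) - ((s + j * d : ℕ) : ℝ)) + c := by
    simp only [ae_all_iff]
    exact fun j k h => htb _ _ h
  have hK : ∀ K : ℕ, K * I ≤ c := by
    intro K
    have hsum : ∫ ω, ∑ k ∈ Finset.range K, max (B (s + d + k * d) ω - B (s + k * d) ω
        - r * (((s + d : ℕ) : ℝ) - (s : ℝ))) (-c) ∂P = K * I := by
      rw [integral_finsetSum _ fun k _ => (hid k).integrable_iff.2 hint]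
      rw [Finset.sum_congr rfl fun k _ => (hid k).integral_eq, Finset.sum_const,
        Finset.card_range, nsmul_eq_mul]
    rw [← hsum]
    calc _ ≤ ∫ _, c ∂P := by
          refine integral_mono_ae
            (integrable_finsetSum _ fun k _ => (hid k).integrable_iff.2 hint)
            (integrable_const _) ?_
          filter_upwards [hall] with ω hω
          have hZ : ∀ j k : ℕ, j ≤ k →
              (B (s + k * d) ω - r * (k * d)) - (B (s + j * d) ω - r * (j * d)) ≤ c := by
            intro j k hjk
            have := hω j k (by gcongr)
            push_cast at this
            linarith
          obtain ⟨j, hj, h⟩ := exists_sum_max_le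
            (fun k => B (s + k * d) ω - r * (k * d)) c hZ K
          refine le_trans (le_of_eq ?_) (h.trans (hZ j K hj))
          refine Finset.sum_congr rfl fun k _ => ?_
          have e : s + d + k * d = s + (k + 1) * d := by ring
          rw [e]
          congr 1
          push_cast
          ring
      _ = c := by simp
  by_contra! hpos
  obtain ⟨K, hKc⟩ := exists_nat_gt (c / I)
  rw [div_lt_iff₀ hpos] at hKc
  exact absurd (hK K) (not_le.2 hKc)

/-- Aggregate of `n` stationary token-bucket-shaped flows: if each `A i` is stationary and
satisfies `A i (s,t) ≤ ρ i (t−s) + σ i` almost surely, then the aggregate `Σ i, A i` is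
MGF-bounded for `θ` with `ρ(θ) = Σ i, ρ i` and
`σ(θ) = (1/θ)·log((1/2)e^{θ Σ σ i} + (1/2)e^{−θ Σ σ i})`. -/
theorem stationary_token_bucket_aggregate
    {Ω : Type*} [MeasurableSpace Ω] (P : Measure Ω) [IsProbabilityMeasure P]
    (θ : ℝ) (hθ : 0 < θ)
    (n : ℕ) (A : Fin n → ℕ → Ω → ℝ) (ρ σ : Fin n → ℝ)
    (hρ : ∀ i, 0 ≤ ρ i) (hσ : ∀ i, 0 ≤ σ i)
    -- each A i is a flow
    (hAmeas : ∀ i t, Measurable (A i t))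
    (hAmono : ∀ i ω, Monotone fun t => A i t ω)
    (hAzero : ∀ i ω, A i 0 ω = 0)
    -- stationarity: increments are shift-invariant in distribution
    (hstat : ∀ i, ∀ τ s t : ℕ, s ≤ t →
      IdentDistrib (fun ω => A i (t + τ) ω - A i (s + τ) ω)
        (fun ω => A i t ω - A i s ω) P P)
    -- token-bucket shaping
    (htb : ∀ i, ∀ s t : ℕ, s ≤ t →
      ∀ᵐ ω ∂P, A i t ω - A i s ω ≤ ρ i * ((t : ℝ) - (s : ℝ)) + σ i) :
    ∀ s t, s ≤ t →
      ∫⁻ ω, ENNReal.ofReal (Real.exp (θ * ∑ i, (A i t ω - A i s ω))) ∂P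
        ≤ ENNReal.ofReal (Real.exp (θ * (∑ i, ρ i) * ((t : ℝ) - (s : ℝ)))
            * (1 / 2 * Real.exp (θ * ∑ i, σ i)
              + 1 / 2 * Real.exp (-(θ * ∑ i, σ i)))) := by
  intro s t hst
  set T : ℝ := (t : ℝ) - (s : ℝ) with hT
  set S : ℝ := ∑ i, σ i with hS
  let D : Fin n → Ω → ℝ := fun i ω => max (A i t ω - A i s ω - ρ i * T) (-σ i)
  have hD : ∀ i, Integrable (D i) P ∧ ∫ ω, D i ω ∂P ≤ 0 := fun i =>
    integral_max_nonpos P (A i) (ρ i) (σ i) (hσ i) (hAmeas i) (hstat i) (htb i) s t hst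
  have hDint : Integrable (fun ω => ∑ i, D i ω) P :=
    integrable_finsetSum _ fun i _ => (hD i).1
  have hDmean : ∫ ω, ∑ i, D i ω ∂P ≤ 0 := by
    rw [integral_finsetSum _ fun i _ => (hD i).1]
    exact Finset.sum_nonpos fun i _ => (hD i).2
  have hS0 : 0 ≤ S := Finset.sum_nonneg fun i _ => hσ i
  have hsinh : 0 ≤ Real.sinh (θ * S) := Real.sinh_nonneg_iff.2 (by positivity)
  have htb' : ∀ᵐ ω ∂P, ∀ i, A i t ω - A i s ω ≤ ρ i * T + σ i :=
    ae_all_iff.2 fun i => htb i s t hst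
  -- The chord bound, affine in `∑ Dᵢ`; for `S = 0` the junk value `x / 0 = 0` makes it constant.
  let G : Ω → ℝ := fun ω => Real.exp (θ * (∑ i, ρ i) * T) *
    (Real.cosh (θ * S) + (∑ i, D i ω) / S * Real.sinh (θ * S))
  have hGint : Integrable G P :=
    (((integrable_const _).add ((hDint.div_const S).mul_const _)).const_mul _)
  have hpt : ∀ᵐ ω ∂P, Real.exp (θ * ∑ i, (A i t ω - A i s ω)) ≤ G ω := by
    filter_upwards [htb'] with ω hω
    have hup : ∑ i, D i ω ≤ S := Finset.sum_le_sum fun i _ =>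
      max_le (by linarith [hω i]) (by linarith [hσ i])
    have hlow : -S ≤ ∑ i, D i ω := by
      rw [hS, ← Finset.sum_neg_distrib]
      exact Finset.sum_le_sum fun i _ => le_max_right _ _
    have hdom : ∑ i, (A i t ω - A i s ω) ≤ (∑ i, ρ i) * T + ∑ i, D i ω := by
      rw [Finset.sum_mul, ← Finset.sum_add_distrib]
      refine Finset.sum_le_sum fun i _ => ?_
      have : A i t ω - A i s ω - ρ i * T ≤ D i ω := le_max_left _ _
      linarith
    have habs : |(∑ i, D i ω) / S| ≤ 1 := by
      rw [abs_div, abs_of_nonneg hS0]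
      exact div_le_one_of_le₀ (abs_le.2 ⟨hlow, hup⟩) hS0
    have hcancel : (∑ i, D i ω) / S * (θ * S) = θ * ∑ i, D i ω := by
      rcases hS0.eq_or_lt with h | h
      · have : ∑ i, D i ω = 0 := by linarith
        simp [this]
      · field_simp
    calc Real.exp (θ * ∑ i, (A i t ω - A i s ω))
        ≤ Real.exp (θ * (∑ i, ρ i) * T + θ * ∑ i, D i ω) := by
          apply Real.exp_le_exp.2
          rw [mul_assoc, ← mul_add]
          exact mul_le_mul_of_nonneg_left hdom hθ.le
      _ = Real.exp (θ * (∑ i, ρ i) * T) * Real.exp ((∑ i, D i ω) / S * (θ * S)) := by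
          rw [Real.exp_add, hcancel]
      _ ≤ G ω := by
          refine mul_le_mul_of_nonneg_left ?_ (Real.exp_pos _).le
          exact Real.exp_mul_le_cosh_add_mul_sinh habs _
  have hG0 : 0 ≤ᵐ[P] G := hpt.mono fun ω h => (Real.exp_pos _).le.trans h
  have hGmean : ∫ ω, G ω ∂P ≤ Real.exp (θ * (∑ i, ρ i) * T) * Real.cosh (θ * S) := by
    simp only [G]
    rw [integral_const_mul, integral_add (integrable_const _)
      ((hDint.div_const S).mul_const _), integral_mul_const, integral_div]
    refine mul_le_mul_of_nonneg_left ?_ (Real.exp_pos _).le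
    have := mul_nonpos_of_nonpos_of_nonneg (div_nonpos_of_nonpos_of_nonneg hDmean hS0) hsinh
    simpa using this
  calc ∫⁻ ω, ENNReal.ofReal (Real.exp (θ * ∑ i, (A i t ω - A i s ω))) ∂P
      ≤ ∫⁻ ω, ENNReal.ofReal (G ω) ∂P :=
        lintegral_mono_ae (hpt.mono fun ω h => ENNReal.ofReal_le_ofReal h)
    _ = ENNReal.ofReal (∫ ω, G ω ∂P) := (ofReal_integral_eq_lintegral_ofReal hGint hG0).symm
    _ ≤ _ := by
        refine ENNReal.ofReal_le_ofReal (hGmean.trans (le_of_eq ?_))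
        rw [Real.cosh_eq]
        ring
end
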